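/- Let M be a nonzero TS-submodule of C_b^∞(k^×) of finite length. Then for every smooth character χ of k^× and every f ∈ M, the zeta integral Z(f,χ,s) = ∫_{k^×} f(x)χ(x)|x|^s d^×x converges for Re(s) sufficiently large, and the quotient Z(f,χ,s)/L(χ⊗M,s) extends to an entire function of s ∈ ℂ. -/

import Mathlib

noncomputable section

open scoped Classical

namespace PSW

/-! ### The affine group `λ.b : x ↦ λ·x + b` over a field `K`. -/

@[ext]
structure Aff (K : Type*) [Field K] where
  t : Kˣ
  s : K

namespace Aff

variable {K : Type*} [Field K]

instance : Mul (Aff K) := ⟨fun g h => ⟨g.t * h.t, g.s + (g.t : K) * h.s⟩⟩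
instance : One (Aff K) := ⟨⟨1, 0⟩⟩
instance : Inv (Aff K) := ⟨fun g => ⟨g.t⁻¹, -(((g.t⁻¹ : Kˣ) : K) * g.s)⟩⟩

@[simp] lemma mul_t (g h : Aff K) : (g * h).t = g.t * h.t := rfl
@[simp] lemma mul_s (g h : Aff K) : (g * h).s = g.s + (g.t : K) * h.s := rfl
@[simp] lemma one_t : (1 : Aff K).t = 1 := rfl
@[simp] lemma one_s : (1 : Aff K).s = 0 := rfl
@[simp] lemma inv_t (g : Aff K) : (g⁻¹).t = g.t⁻¹ := rfl
@[simp] lemma inv_s (g : Aff K) : (g⁻¹).s = -(((g.t⁻¹ : Kˣ) : K) * g.s) := rfl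

instance : Group (Aff K) where
  mul_assoc a b c := by
    ext
    · simp [mul_assoc]
    · simp only [mul_s, mul_t, Units.val_mul]; ring
  one_mul a := by ext <;> simp
  mul_one a := by ext <;> simp
  inv_mul_cancel a := by
    ext
    · simp
    · simp

/-- The element `x_λ` of the group `TS`. -/
def xT (u : Kˣ) : Aff K := ⟨u, 0⟩

/-- The element `s_b` of the group `TS`. -/
def sS (b : K) : Aff K := ⟨1, b⟩

@[simp] lemma xT_t (u : Kˣ) : (xT u : Aff K).t = u := rfl
@[simp] lemma xT_s (u : Kˣ) : (xT u : Aff K).s = 0 := rfl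
@[simp] lemma sS_t (b : K) : (sS b : Aff K).t = 1 := rfl
@[simp] lemma sS_s (b : K) : (sS b : Aff K).s = b := rfl

/-- `T ≅ k^×` as a subgroup of `TS`. -/
def xTHom : Kˣ →* Aff K where
  toFun := xT
  map_one' := rfl
  map_mul' u v := by ext <;> simp [xT]

@[simp] lemma xTHom_apply (u : Kˣ) : (xTHom u : Aff K) = xT u := rfl

lemma mul_sS (g : Aff K) (b : K) : g * sS b = sS ((g.t : K) * b) * g := by
  ext
  · simp
  · simp [add_comm]

lemma sS_mul (b : K) (g : Aff K) : sS b * g = g * sS (((g.t⁻¹ : Kˣ) : K) * b) := by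
  ext
  · simp
  · simp [Units.mul_inv_cancel_left, add_comm]

lemma aff_decomp (g : Aff K) : g = xT g.t * sS (((g.t⁻¹ : Kˣ) : K) * g.s) := by
  ext
  · simp
  · simp [Units.mul_inv_cancel_left]

instance [TopologicalSpace K] : TopologicalSpace (Aff K) :=
  TopologicalSpace.induced (fun g : Aff K => ((g.t, g.s) : Kˣ × K)) inferInstance

end Aff

/-! ### Generalities on representations of a monoid on complex vector spaces. -/

namespace GRep

variable {G : Type*} [Monoid G]

section MonoidModules

variable {V W : Type*} [AddCommMonoid V] [Module ℂ V] [AddCommMonoid W] [Module ℂ W]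

/-- A submodule invariant under the representation. -/
def Invariant (ρ : Representation ℂ G V) (U : Submodule ℂ V) : Prop :=
  ∀ (g : G) (v : V), v ∈ U → ρ g v ∈ U

/-- Equivariance of a linear map with respect to two representations. -/
def Equivariant (ρ : Representation ℂ G V) (σ : Representation ℂ G W) (f : V →ₗ[ℂ] W) : Prop :=
  ∀ (g : G) (v : V), f (ρ g v) = σ g (f v)

/-- Isomorphism of representations. -/
def Iso (ρ : Representation ℂ G V) (σ : Representation ℂ G W) : Prop :=
  ∃ e : V ≃ₗ[ℂ] W, ∀ (g : G) (v : V), e (ρ g v) = σ g (e v)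

/-- Irreducibility. -/
def Irred (ρ : Representation ℂ G V) : Prop :=
  Nontrivial V ∧ ∀ U : Submodule ℂ V, Invariant ρ U → U = ⊥ ∨ U = ⊤

/-- Subrepresentation on an invariant submodule. -/
def sub (ρ : Representation ℂ G V) {U : Submodule ℂ V} (hU : Invariant ρ U) :
    Representation ℂ G ↥U where
  toFun g := (ρ g).restrict fun v hv => hU g v hv
  map_one' := by
    apply LinearMap.ext; intro v; apply Subtype.ext
    simp [LinearMap.restrict_apply]
  map_mul' g h := by
    apply LinearMap.ext; intro v; apply Subtype.ext
    simp [LinearMap.restrict_apply]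

@[simp] lemma sub_apply (ρ : Representation ℂ G V) {U : Submodule ℂ V} (hU : Invariant ρ U)
    (g : G) (v : ↥U) : ((sub ρ hU g v : ↥U) : V) = ρ g (v : V) := rfl

lemma ker_invariant (ρ : Representation ℂ G V) (σ : Representation ℂ G W)
    (f : V →ₗ[ℂ] W) (hf : Equivariant ρ σ f) : Invariant ρ (LinearMap.ker f) := by
  intro g v hv
  rw [LinearMap.mem_ker] at hv ⊢
  rw [hf g v, hv, map_zero]

lemma range_invariant (ρ : Representation ℂ G V) (σ : Representation ℂ G W)
    (f : V →ₗ[ℂ] W) (hf : Equivariant ρ σ f) : Invariant σ (LinearMap.range f) := by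
  rintro g w ⟨v, rfl⟩
  exact ⟨ρ g v, hf g v⟩

lemma map_invariant (ρ : Representation ℂ G V) (σ : Representation ℂ G W)
    (f : V →ₗ[ℂ] W) (hf : Equivariant ρ σ f) (U : Submodule ℂ V) (hU : Invariant ρ U) :
    Invariant σ (U.map f) := by
  rintro g w ⟨v, hv, rfl⟩
  exact ⟨ρ g v, hU g v hv, hf g v⟩

end MonoidModules

section GroupModules

variable {V W : Type*} [AddCommGroup V] [Module ℂ V] [AddCommGroup W] [Module ℂ W]

/-- Quotient representation. -/
def quot (ρ : Representation ℂ G V) (U : Submodule ℂ V) (hU : Invariant ρ U) :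
    Representation ℂ G (V ⧸ U) where
  toFun g := U.mapQ U (ρ g) fun v hv => hU g v hv
  map_one' := by
    apply LinearMap.ext; intro x
    obtain ⟨v, rfl⟩ := Submodule.Quotient.mk_surjective U x
    simp [Submodule.mapQ_apply]
  map_mul' g h := by
    apply LinearMap.ext; intro x
    obtain ⟨v, rfl⟩ := Submodule.Quotient.mk_surjective U x
    simp [Submodule.mapQ_apply]

@[simp] lemma quot_apply (ρ : Representation ℂ G V) (U : Submodule ℂ V) (hU : Invariant ρ U)
    (g : G) (v : V) :
    quot ρ U hU g (Submodule.Quotient.mk v) = Submodule.Quotient.mk (ρ g v) := rfl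

/-- Subquotient representation on `B/A`. -/
def subquot (ρ : Representation ℂ G V) {A B : Submodule ℂ V}
    (hA : Invariant ρ A) (hB : Invariant ρ B) :
    Representation ℂ G (↥B ⧸ A.comap B.subtype) :=
  quot (sub ρ hB) (A.comap B.subtype) fun g v hv => hA g v.1 hv

lemma mkQ_equivariant (ρ : Representation ℂ G V) (U : Submodule ℂ V) (hU : Invariant ρ U) :
    Equivariant ρ (quot ρ U hU) U.mkQ := by
  intro g v
  show Submodule.Quotient.mk (ρ g v) = quot ρ U hU g (Submodule.Quotient.mk v)
  rw [quot_apply]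

end GroupModules

end GRep

/-! ### TS-modules: representations of the affine group. -/

/-- A `TS`-module structure on `V` is a representation of the group `TS ≅ Gl_a(1)`. -/
abbrev Rep (K : Type*) [Field K] (V : Type*) [AddCommGroup V] [Module ℂ V] :=
  Representation ℂ (Aff K) V

section RepDefs

open Aff

variable {K : Type*} [Field K]
variable {V W : Type*} [AddCommGroup V] [Module ℂ V] [AddCommGroup W] [Module ℂ W]

/-- Smoothness: every vector has open stabilizer. -/
def IsSmoothRep [TopologicalSpace K] (ρ : Rep K V) : Prop :=
  ∀ v : V, IsOpen {g : Aff K | ρ g v = v}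

/-- Smoothness of a `T`-module, i.e. of a representation of `T ≅ k^×`. -/
def TIsSmooth {X : Type*} [AddCommMonoid X] [Module ℂ X] [TopologicalSpace K]
    (τ : Representation ℂ Kˣ X) : Prop :=
  ∀ x : X, IsOpen {u : Kˣ | τ u x = x}

/-- Smooth character of `T ≅ k^×` (open kernel, equivalently locally constant). -/
def SmoothMulChar [TopologicalSpace K] (χ : Kˣ →* ℂˣ) : Prop :=
  IsOpen {u : Kˣ | χ u = 1}

/-- The space `V^S` of `S`-invariants. -/
def sInv (ρ : Rep K V) : Submodule ℂ V where
  carrier := {v | ∀ b : K, ρ (sS b) v = v}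
  zero_mem' := fun b => map_zero _
  add_mem' {a b} ha hb := fun c => by rw [map_add, ha c, hb c]
  smul_mem' c v hv := fun b => by rw [map_smul, hv b]

@[simp] lemma mem_sInv (ρ : Rep K V) (v : V) :
    v ∈ sInv ρ ↔ ∀ b : K, ρ (sS b) v = v := Iff.rfl

/-- The `χ`-eigenspace `X^{T,χ}` of a `T`-module. -/
def tEigenT {X : Type*} [AddCommMonoid X] [Module ℂ X]
    (τ : Representation ℂ Kˣ X) (χ : Kˣ →* ℂˣ) : Submodule ℂ X where
  carrier := {x | ∀ u : Kˣ, τ u x = (χ u : ℂ) • x}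
  zero_mem' := fun u => by simp
  add_mem' {a b} ha hb := fun u => by rw [map_add, ha u, hb u, smul_add]
  smul_mem' c x hx := fun u => by rw [map_smul, hx u]; exact smul_comm c ((χ u : ℂ)) x

@[simp] lemma mem_tEigenT {X : Type*} [AddCommMonoid X] [Module ℂ X]
    (τ : Representation ℂ Kˣ X) (χ : Kˣ →* ℂˣ) (x : X) :
    x ∈ tEigenT τ χ ↔ ∀ u : Kˣ, τ u x = (χ u : ℂ) • x := Iff.rfl

/-- The `χ`-eigenspace `V^{T,χ}` of a `TS`-module. -/
def tEigen (ρ : Rep K V) (χ : Kˣ →* ℂˣ) : Submodule ℂ V := tEigenT (ρ.comp xTHom) χ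

/-- The kernel of the projection to the `S`-coinvariants `V_S`. -/
def sCoinvKer (ρ : Rep K V) : Submodule ℂ V :=
  Submodule.span ℂ {w : V | ∃ (b : K) (v : V), w = ρ (sS b) v - v}

/-- The kernel of the projection to the twisted coinvariants `V_{S,ψ'}`. -/
def sTwistKer (ρ : Rep K V) (ψ' : AddChar K ℂ) : Submodule ℂ V :=
  Submodule.span ℂ {w : V | ∃ (b : K) (v : V), w = ρ (sS b) v - ψ' b • v}

/-- The kernel of the projection to the `χ`-coinvariants `X_{T,χ}` of a `T`-module. -/
def tTwistKerT {X : Type*} [AddCommGroup X] [Module ℂ X]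
    (τ : Representation ℂ Kˣ X) (χ : Kˣ →* ℂˣ) : Submodule ℂ X :=
  Submodule.span ℂ {w : X | ∃ (u : Kˣ) (x : X), w = τ u x - (χ u : ℂ) • x}

/-- The kernel of the projection to the `χ`-coinvariants `V_{T,χ}` of a `TS`-module. -/
def tTwistKer (ρ : Rep K V) (χ : Kˣ →* ℂˣ) : Submodule ℂ V := tTwistKerT (ρ.comp xTHom) χ

lemma sCoinvKer_invariant (ρ : Rep K V) : GRep.Invariant ρ (sCoinvKer ρ) := by
  intro g v hv
  have h : sCoinvKer ρ ≤ Submodule.comap (ρ g) (sCoinvKer ρ) := by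
    refine Submodule.span_le.2 ?_
    rintro w ⟨b, v', rfl⟩
    simp only [SetLike.mem_coe, Submodule.mem_comap, map_sub]
    have h1 : ρ g (ρ (sS b) v') = ρ (sS ((g.t : K) * b)) (ρ g v') := by
      rw [← Module.End.mul_apply, ← map_mul, mul_sS, map_mul, Module.End.mul_apply]
    rw [h1]
    exact Submodule.subset_span ⟨(g.t : K) * b, ρ g v', rfl⟩
  exact h hv

lemma sInv_invariant (ρ : Rep K V) : GRep.Invariant ρ (sInv ρ) := by
  intro g v hv
  rw [mem_sInv] at hv ⊢
  intro b
  have h1 : ρ (sS b) (ρ g v) = ρ g (ρ (sS (((g.t⁻¹ : Kˣ) : K) * b)) v) := by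
    rw [← Module.End.mul_apply, ← map_mul, sS_mul, map_mul, Module.End.mul_apply]
  rw [h1, hv _]

/-- The `S`-coinvariants `π₀(V) = V_S` as a `TS`-module (`S` acting trivially). -/
def piZeroRep (ρ : Rep K V) : Rep K (V ⧸ sCoinvKer ρ) :=
  GRep.quot ρ (sCoinvKer ρ) (sCoinvKer_invariant ρ)

/-- The `S`-coinvariants `π₀(V) = V_S` as a `T`-module. -/
def piZeroT (ρ : Rep K V) : Representation ℂ Kˣ (V ⧸ sCoinvKer ρ) :=
  (piZeroRep ρ).comp xTHom

/-- The `T`-module structure on `κ(V) = V^S`. -/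
def sInvT (ρ : Rep K V) : Representation ℂ Kˣ ↥(sInv ρ) :=
  (GRep.sub ρ (sInv_invariant ρ)).comp xTHom

/-- A `TS`-module is perfect if all its eigenspaces `V^{T,χ}` for smooth `χ` vanish. -/
def Perfect [TopologicalSpace K] (ρ : Rep K V) : Prop :=
  ∀ χ : Kˣ →* ℂˣ, SmoothMulChar χ → tEigen ρ χ = ⊥

/-- A finite-dimensional `T`-module is cyclic if each generalized eigenspace is a single
Jordan block; equivalently all eigenspaces `X^{T,χ}` have dimension at most one. -/
def TCyclic {X : Type*} [AddCommGroup X] [Module ℂ X]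
    (τ : Representation ℂ Kˣ X) : Prop :=
  ∀ χ : Kˣ →* ℂˣ, Module.finrank ℂ ↥(tEigenT τ χ) ≤ 1

lemma sCoinvKer_le_comap (ρ : Rep K V) (σ : Rep K W)
    (f : V →ₗ[ℂ] W) (hf : GRep.Equivariant ρ σ f) :
    sCoinvKer ρ ≤ (sCoinvKer σ).comap f := by
  refine Submodule.span_le.2 ?_
  rintro w ⟨b, v, rfl⟩
  simp only [SetLike.mem_coe, Submodule.mem_comap, map_sub]
  rw [hf]
  exact Submodule.subset_span ⟨b, f v, rfl⟩

/-- The map induced by an equivariant map on the `S`-coinvariants `π₀`. -/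
def piZeroMap (ρ : Rep K V) (σ : Rep K W) (f : V →ₗ[ℂ] W) (hf : GRep.Equivariant ρ σ f) :
    (V ⧸ sCoinvKer ρ) →ₗ[ℂ] (W ⧸ sCoinvKer σ) :=
  Submodule.mapQ _ _ f (sCoinvKer_le_comap ρ σ f hf)

lemma piZeroMap_equivariant (ρ : Rep K V) (σ : Rep K W) (f : V →ₗ[ℂ] W)
    (hf : GRep.Equivariant ρ σ f) :
    GRep.Equivariant (piZeroRep ρ) (piZeroRep σ) (piZeroMap ρ σ f hf) := by
  intro g x
  obtain ⟨v, rfl⟩ := Submodule.Quotient.mk_surjective _ x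
  show piZeroMap ρ σ f hf (piZeroRep ρ g (Submodule.Quotient.mk v))
      = piZeroRep σ g (piZeroMap ρ σ f hf (Submodule.Quotient.mk v))
  rw [show piZeroRep ρ g (Submodule.Quotient.mk v) = Submodule.Quotient.mk (ρ g v) from rfl]
  rw [show piZeroMap ρ σ f hf (Submodule.Quotient.mk v) = Submodule.Quotient.mk (f v) from rfl]
  rw [show piZeroMap ρ σ f hf (Submodule.Quotient.mk (ρ g v))
      = Submodule.Quotient.mk (f (ρ g v)) from rfl]
  rw [show piZeroRep σ g (Submodule.Quotient.mk (f v)) = Submodule.Quotient.mk (σ g (f v)) from rfl]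
  rw [hf]

lemma kappaImg_invariant (ρ : Rep K V) :
    GRep.Invariant (piZeroT ρ) ((sInv ρ).map (sCoinvKer ρ).mkQ) := by
  rintro u w ⟨v, hv, rfl⟩
  refine ⟨ρ (xT u) v, sInv_invariant ρ (xT u) v hv, ?_⟩
  rfl

end RepDefs

/-! ### Composition series and degree. -/

/-- A composition series for a `TS`-module, witnessing finite length: a maximal chain of
invariant submodules (the subquotients are then irreducible). -/
structure CompSeries {K : Type*} [Field K] {V : Type*} [AddCommGroup V] [Module ℂ V]
    (ρ : Rep K V) where
  n : ℕ
  W : ℕ → Submodule ℂ V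
  bot : W 0 = ⊥
  top : W n = ⊤
  inv : ∀ i, GRep.Invariant ρ (W i)
  lt : ∀ i < n, W i < W (i + 1)
  maximal : ∀ i < n, ∀ C : Submodule ℂ V, GRep.Invariant ρ C → W i ≤ C → C ≤ W (i + 1) →
    C = W i ∨ C = W (i + 1)

/-- The number of Jordan–Hölder constituents of a composition series isomorphic to a given
representation `σ` (applied with `σ = 𝕊`, this is the degree). -/
def CompSeries.deg {K : Type*} [Field K] {V : Type*} [AddCommGroup V] [Module ℂ V]
    {ρ : Rep K V} (c : CompSeries ρ) {W₀ : Type*} [AddCommMonoid W₀] [Module ℂ W₀]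
    (σ : Representation ℂ (Aff K) W₀) : ℕ :=
  (Finset.univ.filter fun i : Fin c.n =>
    GRep.Iso (GRep.subquot ρ (c.inv i.1) (c.inv (i.1 + 1))) σ).card

/-! ### Fiber products of a `T`-module with a `TS`-module over a `T`-module. -/

section Fiber

open Aff

variable {K : Type*} [Field K]
variable {X Y E : Type*} [AddCommGroup X] [Module ℂ X] [AddCommGroup Y] [Module ℂ Y]
  [AddCommGroup E] [Module ℂ E]

/-- The product `TS`-module `X × E` where `S` acts trivially on the `T`-module `X`. -/
def prodRepTE (τ : Representation ℂ Kˣ X) (ρ : Rep K E) : Rep K (X × E) where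
  toFun g := (τ g.t).prodMap (ρ g)
  map_one' := by
    apply LinearMap.ext; rintro ⟨x, v⟩
    simp
  map_mul' g h := by
    apply LinearMap.ext; rintro ⟨x, v⟩
    simp [map_mul]

/-- The underlying space of the fiber product `𝔼[f] = X ×_Y E`. -/
def fiberKer (f : X →ₗ[ℂ] Y) (q : E →ₗ[ℂ] Y) : Submodule ℂ (X × E) :=
  LinearMap.ker (f.comp (LinearMap.fst ℂ X E) - q.comp (LinearMap.snd ℂ X E))

lemma mem_fiberKer (f : X →ₗ[ℂ] Y) (q : E →ₗ[ℂ] Y) (p : X × E) :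
    p ∈ fiberKer f q ↔ f p.1 = q p.2 := by
  simp [fiberKer, sub_eq_zero]

lemma fiber_invariant (τX : Representation ℂ Kˣ X) (ρE : Rep K E)
    (τY : Representation ℂ Kˣ Y) (f : X →ₗ[ℂ] Y) (q : E →ₗ[ℂ] Y)
    (hf : ∀ (u : Kˣ) (x : X), f (τX u x) = τY u (f x))
    (hq : sCoinvKer ρE ≤ LinearMap.ker q)
    (hqT : ∀ (u : Kˣ) (v : E), q (ρE (xT u) v) = τY u (q v)) :
    GRep.Invariant (prodRepTE τX ρE) (fiberKer f q) := by
  intro g p hp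
  rw [mem_fiberKer] at hp ⊢
  have hsb : q (ρE (sS (((g.t⁻¹ : Kˣ) : K) * g.s)) p.2) = q p.2 := by
    have h1 : ρE (sS (((g.t⁻¹ : Kˣ) : K) * g.s)) p.2 - p.2 ∈ sCoinvKer ρE :=
      Submodule.subset_span ⟨_, _, rfl⟩
    have h2 := hq h1
    rw [LinearMap.mem_ker, map_sub, sub_eq_zero] at h2
    exact h2
  have hdecomp : ρE g p.2 = ρE (xT g.t) (ρE (sS (((g.t⁻¹ : Kˣ) : K) * g.s)) p.2) := by
    conv_lhs => rw [aff_decomp g]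
    rw [map_mul, Module.End.mul_apply]
  have h1 : ((prodRepTE τX ρE) g p).1 = τX g.t p.1 := rfl
  have h2 : ((prodRepTE τX ρE) g p).2 = ρE g p.2 := rfl
  rw [h1, h2, hf, hp, hdecomp, hqT, hsb]

end Fiber

/-! ### Jordan blocks of finite-dimensional `T`-modules. -/

section Jordan

variable {K : Type*} [Field K]
variable {X : Type*} [AddCommGroup X] [Module ℂ X]

/-- A Jordan block of a `T`-module: a nonzero indecomposable invariant direct summand. -/
def IsJordanBlock (τ : Representation ℂ Kˣ X) (J : Submodule ℂ X) : Prop :=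
  J ≠ ⊥ ∧ GRep.Invariant τ J ∧ (∃ C : Submodule ℂ X, GRep.Invariant τ C ∧ IsCompl J C) ∧
    ∀ A B : Submodule ℂ X, GRep.Invariant τ A → GRep.Invariant τ B → A ≤ J → B ≤ J →
      A ⊓ B = ⊥ → A ⊔ B = J → A = ⊥ ∨ B = ⊥

end Jordan

/-! ### Invariants and coinvariants for a normal subgroup of an arbitrary group. -/

section Grp

variable {Γ : Type*} [Group Γ]
variable {V W : Type*} [AddCommGroup V] [Module ℂ V] [AddCommGroup W] [Module ℂ W]

/-- Invariants `V^N` under a subgroup `N`. -/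
def grpInv (ρ : Representation ℂ Γ V) (N : Subgroup Γ) : Submodule ℂ V where
  carrier := {v | ∀ n ∈ N, ρ n v = v}
  zero_mem' := fun n _ => map_zero _
  add_mem' {a b} ha hb := fun n hn => by rw [map_add, ha n hn, hb n hn]
  smul_mem' c v hv := fun n hn => by rw [map_smul, hv n hn]

@[simp] lemma mem_grpInv (ρ : Representation ℂ Γ V) (N : Subgroup Γ) (v : V) :
    v ∈ grpInv ρ N ↔ ∀ n ∈ N, ρ n v = v := Iff.rfl

/-- The kernel of the projection to the coinvariants `V_N` under a subgroup `N`. -/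
def grpCoinvKer (ρ : Representation ℂ Γ V) (N : Subgroup Γ) : Submodule ℂ V :=
  Submodule.span ℂ {w : V | ∃ n ∈ N, ∃ v : V, w = ρ n v - v}

lemma grpInv_invariant (ρ : Representation ℂ Γ V) (N : Subgroup Γ) [hN : N.Normal] :
    GRep.Invariant ρ (grpInv ρ N) := by
  intro γ v hv
  rw [mem_grpInv] at hv ⊢
  intro n hn
  have hmem : γ⁻¹ * n * γ ∈ N := by
    have := hN.conj_mem n hn γ⁻¹
    simpa using this
  have key : ρ n (ρ γ v) = ρ γ (ρ (γ⁻¹ * n * γ) v) := by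
    rw [← Module.End.mul_apply, ← map_mul, ← Module.End.mul_apply, ← map_mul]
    congr 1
    group
  rw [key, hv _ hmem]

lemma grpCoinvKer_invariant (ρ : Representation ℂ Γ V) (N : Subgroup Γ) [hN : N.Normal] :
    GRep.Invariant ρ (grpCoinvKer ρ N) := by
  intro γ v hv
  have h : grpCoinvKer ρ N ≤ Submodule.comap (ρ γ) (grpCoinvKer ρ N) := by
    refine Submodule.span_le.2 ?_
    rintro w ⟨n, hn, v', rfl⟩
    simp only [SetLike.mem_coe, Submodule.mem_comap, map_sub]
    have key : ρ γ (ρ n v') = ρ (γ * n * γ⁻¹) (ρ γ v') := by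
      rw [← Module.End.mul_apply, ← map_mul, ← Module.End.mul_apply, ← map_mul]
      congr 1
      group
    rw [key]
    exact Submodule.subset_span ⟨γ * n * γ⁻¹, hN.conj_mem n hn γ, ρ γ v', rfl⟩
  exact h hv

/-- The map induced on `N`-invariants by an equivariant map. -/
def grpInvRestrict (ρ : Representation ℂ Γ V) (σ : Representation ℂ Γ W) (N : Subgroup Γ)
    (f : V →ₗ[ℂ] W) (hf : GRep.Equivariant ρ σ f) : ↥(grpInv ρ N) →ₗ[ℂ] ↥(grpInv σ N) :=
  f.restrict (fun v hv => by
    rw [mem_grpInv] at hv ⊢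
    intro n hn
    rw [← hf n v, hv n hn])

lemma grpCoinvKer_le_comap (ρ : Representation ℂ Γ V) (σ : Representation ℂ Γ W) (N : Subgroup Γ)
    (f : V →ₗ[ℂ] W) (hf : GRep.Equivariant ρ σ f) :
    grpCoinvKer ρ N ≤ (grpCoinvKer σ N).comap f := by
  refine Submodule.span_le.2 ?_
  rintro w ⟨n, hn, v, rfl⟩
  simp only [SetLike.mem_coe, Submodule.mem_comap, map_sub]
  rw [hf]
  exact Submodule.subset_span ⟨n, hn, f v, rfl⟩

/-- The map induced on `N`-coinvariants by an equivariant map. -/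
def grpCoinvMap (ρ : Representation ℂ Γ V) (σ : Representation ℂ Γ W) (N : Subgroup Γ)
    (f : V →ₗ[ℂ] W) (hf : GRep.Equivariant ρ σ f) :
    (V ⧸ grpCoinvKer ρ N) →ₗ[ℂ] (W ⧸ grpCoinvKer σ N) :=
  Submodule.mapQ _ _ f (grpCoinvKer_le_comap ρ σ N f hf)

end Grp

/-! ### Tate L-factors of finite-dimensional `T`-modules. -/

section Lfactor

variable {K : Type*} [NontriviallyNormedField K]
variable {X : Type*} [AddCommGroup X] [Module ℂ X]

/-- The part of a `T`-module where the `χ`-twisted action is unramified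
(trivial on the norm-one units). -/
def unrPart (τ : Representation ℂ Kˣ X) (χ : Kˣ →* ℂˣ) : Submodule ℂ X where
  carrier := {x | ∀ u : Kˣ, ‖(u : K)‖ = 1 → (χ u : ℂ) • τ u x = x}
  zero_mem' := fun u _ => by simp
  add_mem' {a b} ha hb := fun u hu => by rw [map_add, smul_add, ha u hu, hb u hu]
  smul_mem' c x hx := fun u hu => by
    rw [map_smul, smul_comm, hx u hu]

lemma unrPart_stable (τ : Representation ℂ Kˣ X) (χ : Kˣ →* ℂˣ) (ϖ : Kˣ) :
    ∀ x ∈ unrPart τ χ, ((χ ϖ : ℂ) • τ ϖ) x ∈ unrPart τ χ := by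
  intro x hx u hu
  have comm : τ u (τ ϖ x) = τ ϖ (τ u x) := by
    rw [← Module.End.mul_apply, ← map_mul, mul_comm, map_mul, Module.End.mul_apply]
  calc (χ u : ℂ) • τ u (((χ ϖ : ℂ) • τ ϖ) x)
      = (χ ϖ : ℂ) • ((χ u : ℂ) • τ u (τ ϖ x)) := by
        rw [LinearMap.smul_apply, map_smul, smul_comm]
    _ = (χ ϖ : ℂ) • τ ϖ ((χ u : ℂ) • τ u x) := by rw [comm, map_smul]
    _ = ((χ ϖ : ℂ) • τ ϖ) x := by rw [hx u hu, LinearMap.smul_apply]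

/-- The twisted uniformizer action on the unramified part. -/
def twistOp (τ : Representation ℂ Kˣ X) (χ : Kˣ →* ℂˣ) (ϖ : Kˣ) :
    ↥(unrPart τ χ) →ₗ[ℂ] ↥(unrPart τ χ) :=
  LinearMap.restrict ((χ ϖ : ℂ) • τ ϖ) (unrPart_stable τ χ ϖ)

/-- The Tate `L`-factor `L(s, χ ⊗ X) = det(1 - q^{-s}·(χ·τ)(ϖ) | X^{unr,χ})⁻¹` of a
(finite-dimensional) `T`-module `X`, relative to a uniformizer `ϖ`. -/
def Lfactor (τ : Representation ℂ Kˣ X) (χ : Kˣ →* ℂˣ) (ϖ : Kˣ) (s : ℂ) : ℂ :=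
  (LinearMap.det (LinearMap.id - (‖(ϖ : K)‖ : ℂ) ^ s • twistOp τ χ ϖ))⁻¹

end Lfactor

/-! ### The concrete `TS`-modules `𝕊`, `C_c^∞(k)`, `C_b^∞(k^×)` and `𝔼[χ]`. -/

section Concrete

open Aff

variable (K : Type*) [NontriviallyNormedField K]

/-- The representation of `TS` on functions on `k^×`:
`(s_b g)(x) = ψ(bx) g(x)`, `(x_λ g)(x) = g(xλ)`. -/
def repCx (ψ : AddChar K ℂ) : Rep K (Kˣ → ℂ) where
  toFun g :=
    { toFun := fun f x => ψ (g.s * (x : K)) * f (x * g.t)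
      map_add' := fun f₁ f₂ => by funext x; simp [mul_add]
      map_smul' := fun c f => by
        funext x
        simp only [Pi.smul_apply, smul_eq_mul, RingHom.id_apply]
        ring }
  map_one' := by
    apply LinearMap.ext; intro f; funext x
    simp
  map_mul' g h := by
    apply LinearMap.ext; intro f; funext x
    show ψ ((g.s + (g.t : K) * h.s) * (x : K)) * f (x * (g.t * h.t))
        = ψ (g.s * (x : K)) * (ψ (h.s * ((x * g.t : Kˣ) : K)) * f (x * g.t * h.t))
    have harg : (g.s + (g.t : K) * h.s) * (x : K)
        = g.s * (x : K) + h.s * ((x * g.t : Kˣ) : K) := by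
      push_cast
      ring
    rw [harg, AddChar.map_add_eq_mul, ← mul_assoc x g.t h.t]
    ring

@[simp] lemma repCx_apply (ψ : AddChar K ℂ) (g : Aff K) (f : Kˣ → ℂ) (x : Kˣ) :
    repCx K ψ g f x = ψ (g.s * (x : K)) * f (x * g.t) := rfl

/-- The `χ`-twisted representation of `TS` on functions on `k`:
`(s_b g)(x) = ψ(bx) g(x)`, `(x_λ g)(x) = χ(λ) g(xλ)`.  (Take `χ = 1` for the
untwisted action on `C_c^∞(k)`; the module `𝔼[χ]` is `C_c^∞(k)` with the twisted action.) -/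
def repCc (ψ : AddChar K ℂ) (χ : Kˣ →* ℂˣ) : Rep K (K → ℂ) where
  toFun g :=
    { toFun := fun f x => (χ g.t : ℂ) * ψ (g.s * x) * f (x * (g.t : K))
      map_add' := fun f₁ f₂ => by funext x; simp [mul_add]
      map_smul' := fun c f => by
        funext x
        simp only [Pi.smul_apply, smul_eq_mul, RingHom.id_apply]
        ring }
  map_one' := by
    apply LinearMap.ext; intro f; funext x
    simp
  map_mul' g h := by
    apply LinearMap.ext; intro f; funext x
    show (χ (g.t * h.t) : ℂ) * ψ ((g.s + (g.t : K) * h.s) * x) * f (x * ((g.t * h.t : Kˣ) : K))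
        = (χ g.t : ℂ) * ψ (g.s * x) * ((χ h.t : ℂ) * ψ (h.s * (x * (g.t : K)))
            * f (x * (g.t : K) * (h.t : K)))
    have harg : (g.s + (g.t : K) * h.s) * x = g.s * x + h.s * (x * (g.t : K)) := by ring
    have harg2 : x * ((g.t * h.t : Kˣ) : K) = x * (g.t : K) * (h.t : K) := by
      push_cast
      ring
    rw [harg, harg2, AddChar.map_add_eq_mul, map_mul]
    push_cast
    ring

@[simp] lemma repCc_apply (ψ : AddChar K ℂ) (χ : Kˣ →* ℂˣ) (g : Aff K) (f : K → ℂ) (x : K) :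
    repCc K ψ χ g f x = (χ g.t : ℂ) * ψ (g.s * x) * f (x * (g.t : K)) := rfl

/-- The one-dimensional `TS`-module `ℂ_χ` on which `S` acts trivially and `x_λ` by `χ(λ)`. -/
def chiRep (χ : Kˣ →* ℂˣ) : Rep K ℂ where
  toFun g := (χ g.t : ℂ) • LinearMap.id
  map_one' := by
    apply LinearMap.ext; intro c
    simp
  map_mul' g h := by
    apply LinearMap.ext; intro c
    simp only [mul_t, map_mul, LinearMap.smul_apply, LinearMap.id_apply, Module.End.mul_apply,
      Units.val_mul, smul_eq_mul]
    ring

/-- `C_c^∞(k)`: locally constant, compactly supported functions on `k`. -/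
def CcK : Submodule ℂ (K → ℂ) where
  carrier := {f | IsLocallyConstant f ∧ HasCompactSupport f}
  zero_mem' := ⟨IsLocallyConstant.const 0, by
    rw [hasCompactSupport_def]
    simp⟩
  add_mem' {a b} ha hb := ⟨ha.1.comp₂ hb.1 (· + ·), ha.2.add hb.2⟩
  smul_mem' c f hf := by
    refine ⟨?_, hf.2.mono (Function.support_const_smul_subset c f)⟩
    exact hf.1.comp (fun z => c * z)

@[simp] lemma mem_CcK (f : K → ℂ) :
    f ∈ CcK K ↔ IsLocallyConstant f ∧ HasCompactSupport f := Iff.rfl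

/-- `𝕊 = C_c^∞(k^×)`: locally constant, compactly supported functions on `k^×`. -/
def SSx : Submodule ℂ (Kˣ → ℂ) where
  carrier := {f | IsLocallyConstant f ∧ HasCompactSupport f}
  zero_mem' := ⟨IsLocallyConstant.const 0, by
    rw [hasCompactSupport_def]
    simp⟩
  add_mem' {a b} ha hb := ⟨ha.1.comp₂ hb.1 (· + ·), ha.2.add hb.2⟩
  smul_mem' c f hf := by
    refine ⟨?_, hf.2.mono (Function.support_const_smul_subset c f)⟩
    exact hf.1.comp (fun z => c * z)

@[simp] lemma mem_SSx (f : Kˣ → ℂ) :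
    f ∈ SSx K ↔ IsLocallyConstant f ∧ HasCompactSupport f := Iff.rfl

/-- `C_b^∞(k^×)`: locally constant functions on `k^×` whose support has compact closure
in `k`. -/
def Cb : Submodule ℂ (Kˣ → ℂ) where
  carrier := {f | IsLocallyConstant f ∧
    IsCompact (closure (((↑) : Kˣ → K) '' Function.support f))}
  zero_mem' := ⟨IsLocallyConstant.const 0, by simp⟩
  add_mem' {a b} ha hb := by
    refine ⟨ha.1.comp₂ hb.1 (· + ·), ?_⟩
    refine IsCompact.of_isClosed_subset (ha.2.union hb.2) isClosed_closure ?_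
    refine closure_minimal ?_ (ha.2.isClosed.union hb.2.isClosed)
    refine (Set.image_mono (Function.support_add _ _)).trans ?_
    rw [Set.image_union]
    exact Set.union_subset_union subset_closure subset_closure
  smul_mem' c f hf := by
    refine ⟨hf.1.comp (fun z => c * z), ?_⟩
    refine IsCompact.of_isClosed_subset hf.2 isClosed_closure ?_
    refine closure_mono ?_
    exact Set.image_mono (Function.support_const_smul_subset c f)

@[simp] lemma mem_Cb (f : Kˣ → ℂ) :
    f ∈ Cb K ↔ IsLocallyConstant f ∧
      IsCompact (closure (((↑) : Kˣ → K) '' Function.support f)) := Iff.rfl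

variable {K}

lemma SSx_invariant (ψ : AddChar K ℂ) (hψlc : IsLocallyConstant (⇑ψ)) :
    GRep.Invariant (repCx K ψ) (SSx K) := by
  rintro g f hf
  rw [mem_SSx] at hf ⊢
  obtain ⟨hlc, hcs⟩ := hf
  have heq : repCx K ψ g f
      = (fun x : Kˣ => ψ (g.s * (x : K))) * (f ∘ (Homeomorph.mulRight g.t)) := rfl
  constructor
  · rw [heq]
    refine IsLocallyConstant.mul ?_ ?_
    · exact hψlc.comp_continuous (continuous_const.mul Units.continuous_val)
    · exact hlc.comp_continuous (Homeomorph.mulRight g.t).continuous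
  · rw [heq]
    exact (hcs.comp_homeomorph (Homeomorph.mulRight g.t)).mul_left

lemma CcK_invariant (ψ : AddChar K ℂ) (hψlc : IsLocallyConstant (⇑ψ)) (χ : Kˣ →* ℂˣ) :
    GRep.Invariant (repCc K ψ χ) (CcK K) := by
  rintro g f hf
  rw [mem_CcK] at hf ⊢
  obtain ⟨hlc, hcs⟩ := hf
  have hne : ((g.t : Kˣ) : K) ≠ 0 := g.t.ne_zero
  have heq : repCc K ψ χ g f
      = (fun x : K => (χ g.t : ℂ) * ψ (g.s * x)) * (f ∘ (Homeomorph.mulRight₀ (g.t : K) hne)) :=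
    rfl
  constructor
  · rw [heq]
    refine IsLocallyConstant.mul ?_ ?_
    · exact ((hψlc.comp_continuous (continuous_const.mul continuous_id)).comp
        (fun z => (χ g.t : ℂ) * z))
    · exact hlc.comp_continuous (Homeomorph.mulRight₀ (g.t : K) hne).continuous
  · rw [heq]
    exact (hcs.comp_homeomorph (Homeomorph.mulRight₀ (g.t : K) hne)).mul_left

/-- The `TS`-module `𝕊 = C_c^∞(k^×)`. -/
def SRep (ψ : AddChar K ℂ) (hψlc : IsLocallyConstant (⇑ψ)) : Rep K ↥(SSx K) :=
  GRep.sub (repCx K ψ) (SSx_invariant ψ hψlc)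

/-- The `TS`-module `𝔼[χ]`, i.e. `C_c^∞(k)` with the `χ`-twisted action. -/
def ERep (ψ : AddChar K ℂ) (hψlc : IsLocallyConstant (⇑ψ)) (χ : Kˣ →* ℂˣ) : Rep K ↥(CcK K) :=
  GRep.sub (repCc K ψ χ) (CcK_invariant ψ hψlc χ)

/-- The `TS`-module `𝕊^s`, a direct sum of `s` copies of `𝕊`. -/
def SRepPow (ψ : AddChar K ℂ) (hψlc : IsLocallyConstant (⇑ψ)) (s : ℕ) :
    Rep K (Fin s → ↥(SSx K)) where
  toFun g := LinearMap.pi fun i => (SRep ψ hψlc g).comp (LinearMap.proj i)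
  map_one' := by
    apply LinearMap.ext; intro v; funext i
    simp
  map_mul' g h := by
    apply LinearMap.ext; intro v; funext i
    simp [map_mul]

/-- The submodule `E` of `C_b^∞(k^×)` consisting of functions which are `χ`-eigenvectors
modulo `𝕊`; the quotient `E/𝕊` is the `χ`-eigenspace of `C_b^∞(k^×)/𝕊`. -/
def quotEigen (ψ : AddChar K ℂ) (χ : Kˣ →* ℂˣ) : Submodule ℂ (Kˣ → ℂ) where
  carrier := {f | f ∈ Cb K ∧ ∀ u : Kˣ, repCx K ψ (Aff.xT u) f - (χ u : ℂ) • f ∈ SSx K}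
  zero_mem' := ⟨(Cb K).zero_mem, fun u => by simpa using (SSx K).zero_mem⟩
  add_mem' {a b} ha hb := by
    refine ⟨(Cb K).add_mem ha.1 hb.1, fun u => ?_⟩
    rw [map_add, smul_add, add_sub_add_comm]
    exact (SSx K).add_mem (ha.2 u) (hb.2 u)
  smul_mem' c f hf := by
    refine ⟨(Cb K).smul_mem c hf.1, fun u => ?_⟩
    rw [map_smul, smul_comm, ← smul_sub]
    exact (SSx K).smul_mem c (hf.2 u)

/-- Evaluation at `0 ∈ k`, realizing the quotient map `𝔼[χ] → ℂ_χ` with kernel `𝕊`. -/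
def ev0 : ↥(CcK K) →ₗ[ℂ] ℂ where
  toFun f := (f : K → ℂ) 0
  map_add' f g := rfl
  map_smul' c f := rfl

end Concrete

/-! ### The diagonal torus in GL(2). -/

section GL2

variable {K : Type*} [Field K]

/-- The diagonal element `diag(a, b)` of `GL(2, K)`. -/
def diagGL (a b : Kˣ) : Matrix.GeneralLinearGroup (Fin 2) K where
  val := Matrix.diagonal ![(a : K), (b : K)]
  inv := Matrix.diagonal ![((a : K))⁻¹, ((b : K))⁻¹]
  val_inv := by
    ext i j
    fin_cases i <;> fin_cases j <;>
      simp [Matrix.mul_apply, Fin.sum_univ_two, Matrix.diagonal, Matrix.one_apply,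
        a.ne_zero, b.ne_zero]
  inv_val := by
    ext i j
    fin_cases i <;> fin_cases j <;>
      simp [Matrix.mul_apply, Fin.sum_univ_two, Matrix.diagonal, Matrix.one_apply,
        a.ne_zero, b.ne_zero]

end GL2

section AlgebraPart

/-- Rank of a submodule relative to a composition series. -/
def csRank {K : Type*} [Field K] {V : Type*} [AddCommGroup V] [Module ℂ V] {ρ : Rep K V}
    (c : CompSeries ρ) (A : Submodule ℂ V) : ℕ :=
  ((Finset.range c.n).filter fun i => ¬ (A ⊓ c.W (i + 1) ≤ c.W i)).card

lemma csRank_le {K : Type*} [Field K] {V : Type*} [AddCommGroup V] [Module ℂ V] {ρ : Rep K V}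
    (c : CompSeries ρ) (A : Submodule ℂ V) : csRank c A ≤ c.n := by
  unfold csRank
  exact (Finset.card_filter_le _ _).trans (by simp)

lemma csRank_lt {K : Type*} [Field K] {V : Type*} [AddCommGroup V] [Module ℂ V] {ρ : Rep K V}
    (c : CompSeries ρ) (A B : Submodule ℂ V) (hA : GRep.Invariant ρ A)
    (hAB : A < B) : csRank c A < csRank c B := by
  unfold csRank
  have hsub : ((Finset.range c.n).filter fun i => ¬ (A ⊓ c.W (i + 1) ≤ c.W i)) ⊆
      ((Finset.range c.n).filter fun i => ¬ (B ⊓ c.W (i + 1) ≤ c.W i)) := by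
    intro i hi
    rw [Finset.mem_filter] at hi ⊢
    exact ⟨hi.1, fun h => hi.2 ((inf_le_inf_right _ hAB.le).trans h)⟩
  apply Finset.card_lt_card
  refine Finset.ssubset_iff_subset_ne.2 ⟨hsub, fun heq => ?_⟩
  have key : ∀ i, i ≤ c.n → B ⊓ c.W i ≤ A := by
    intro i
    induction i with
    | zero => intro _; rw [c.bot]; simp
    | succ i ih =>
      intro hi
      have ih' := ih (by omega)
      by_cases hB : B ⊓ c.W (i + 1) ≤ c.W i
      · exact (le_inf inf_le_left hB).trans ih'
      · have hmem : i ∈ ((Finset.range c.n).filter fun i => ¬ (B ⊓ c.W (i + 1) ≤ c.W i)) := by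
          rw [Finset.mem_filter]; exact ⟨Finset.mem_range.2 (by omega), hB⟩
        rw [← heq, Finset.mem_filter] at hmem
        have hle : c.W i ≤ c.W (i + 1) := (c.lt i (by omega)).le
        have hC := c.maximal i (by omega) ((A ⊓ c.W (i + 1)) ⊔ c.W i) (by
          intro g v hv
          obtain ⟨a, ha, w, hw, rfl⟩ := Submodule.mem_sup.1 hv
          rw [map_add]
          exact Submodule.add_mem_sup ⟨hA g a ha.1, c.inv _ g a ha.2⟩ (c.inv _ g w hw))
          le_sup_right (sup_le inf_le_right hle)
        rcases hC with hC | hC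
        · exact absurd (le_sup_left.trans hC.le) hmem.2
        · rintro b ⟨hb, hbW⟩
          rw [← hC] at hbW
          obtain ⟨a, ha, w, hw, rfl⟩ := Submodule.mem_sup.1 hbW
          have hwB : w ∈ B := by
            have := B.sub_mem hb (hAB.le ha.1)
            simpa using this
          exact A.add_mem ha.1 (ih' ⟨hwB, hw⟩)
  have := key c.n le_rfl
  rw [c.top, inf_top_eq] at this
  exact hAB.not_ge this

variable {G : Type*} [CommGroup G] {X : Type*} [AddCommGroup X] [Module ℂ X]

lemma chain_stab (τ : Representation ℂ G X) (r : Submodule ℂ X → ℕ)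
    (hr : ∀ U V, GRep.Invariant τ U → GRep.Invariant τ V → U < V → r U < r V)
    (Z : Submodule ℂ X) (hZ : GRep.Invariant τ Z) (D : Module.End ℂ X)
    (hD : ∀ g x, D (τ g x) = τ g (D x)) (hDZ : ∀ z ∈ Z, D z ∈ Z) :
    ∃ k : ℕ, ∀ z ∈ Z, ∃ z' ∈ Z, (D ^ k) z = (D ^ (k + 1)) z' := by
  have hDk : ∀ k g x, (D ^ k) (τ g x) = τ g ((D ^ k) x) := by
    intro k; induction k with
    | zero => simp
    | succ k ih => intro g x; rw [pow_succ, Module.End.mul_apply, hD, ih, Module.End.mul_apply]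
  have hinv : ∀ k, GRep.Invariant τ (Z.map (D ^ k)) := by
    rintro k g _ ⟨z, hz, rfl⟩
    exact ⟨τ g z, hZ g z hz, hDk k g z⟩
  have hanti : ∀ k, Z.map (D ^ (k + 1)) ≤ Z.map (D ^ k) := by
    rintro k _ ⟨z, hz, rfl⟩
    exact ⟨D z, hDZ z hz, by rw [pow_succ, Module.End.mul_apply]⟩
  by_contra hcon
  push Not at hcon
  have hlt : ∀ k, r (Z.map (D ^ k)) + k ≤ r (Z.map (D ^ 0)) := by
    intro k; induction k with
    | zero => simp
    | succ k ih =>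
      have : Z.map (D ^ (k + 1)) < Z.map (D ^ k) := by
        refine lt_of_le_not_ge (hanti k) fun h => ?_
        obtain ⟨z, hz, hne⟩ := hcon k
        obtain ⟨z', hz', he⟩ := h ⟨z, hz, rfl⟩
        exact hne z' hz' he.symm
      have := hr _ _ (hinv _) (hinv _) this
      omega
  have := hlt (r (Z.map (D ^ 0)) + 1)
  omega

lemma fd_of_local (τ : Representation ℂ G X) (r : Submodule ℂ X → ℕ) (n : ℕ)
    (hr : ∀ U V, GRep.Invariant τ U → GRep.Invariant τ V → U < V → r U < r V)
    (hb : ∀ U, r U ≤ n)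
    (Y : Submodule ℂ X)
    (hloc : ∀ y ∈ Y, ∃ S : Submodule ℂ X, GRep.Invariant τ S ∧ S ≤ Y ∧ y ∈ S ∧
      FiniteDimensional ℂ S) : FiniteDimensional ℂ Y := by
  let P : Set ℕ := {m | ∃ S : Submodule ℂ X, GRep.Invariant τ S ∧ S ≤ Y ∧
      FiniteDimensional ℂ S ∧ r S = m}
  have hPne : P.Nonempty := by
    obtain ⟨S, h1, h2, -, h4⟩ := hloc 0 Y.zero_mem
    exact ⟨r S, S, h1, h2, h4, rfl⟩
  have hPb : BddAbove P := ⟨n, by rintro _ ⟨S, -, -, -, rfl⟩; exact hb S⟩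
  obtain ⟨S, h1, h2, h3, h4⟩ := Nat.sSup_mem hPne hPb
  have : Y ≤ S := by
    intro y hy
    by_contra hyS
    obtain ⟨S', k1, k2, k3, k4⟩ := hloc y hy
    have hinv : GRep.Invariant τ (S ⊔ S') := by
      intro g v hv
      obtain ⟨a, ha, b, hb, rfl⟩ := Submodule.mem_sup.1 hv
      rw [map_add]
      exact Submodule.add_mem_sup (h1 g a ha) (k1 g b hb)
    have hlt : S < S ⊔ S' := lt_of_le_not_ge le_sup_left fun h => hyS (h (le_sup_right (a := S) k3))
    have h5 := hr _ _ h1 hinv hlt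
    have h6 : r (S ⊔ S') ≤ sSup P := le_csSup hPb ⟨_, hinv, sup_le h2 k2, inferInstance, rfl⟩
    omega
  exact Submodule.finiteDimensional_of_le this

lemma poly_orbit_fd (F : Module.End ℂ X) (y : X) (q : Polynomial ℂ) (hq : q ≠ 0)
    (hqy : Polynomial.aeval F q y = 0) :
    ∃ S : Submodule ℂ X, FiniteDimensional ℂ S ∧ y ∈ S ∧
      (∀ x, x ∈ S ↔ ∃ p : Polynomial ℂ, x = Polynomial.aeval F p y) := by
  let L : Polynomial ℂ →ₗ[ℂ] X :=
    (LinearMap.applyₗ y).comp (Polynomial.aeval F).toLinearMap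
  have hL : ∀ p, L p = Polynomial.aeval F p y := fun p => rfl
  refine ⟨LinearMap.range L, ?_, ⟨1, by simp [hL]⟩, fun x => ?_⟩
  · have : LinearMap.range L ≤ (Polynomial.degreeLT ℂ (q.natDegree + 1)).map L := by
      rintro _ ⟨p, rfl⟩
      refine ⟨p % q, ?_, ?_⟩
      · rw [SetLike.mem_coe, Polynomial.mem_degreeLT]
        refine (EuclideanDomain.mod_lt p hq).trans_le ?_
        refine Polynomial.degree_le_natDegree.trans ?_
        exact_mod_cast Nat.le_succ _
      · have h := EuclideanDomain.mod_add_div p q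
        rw [hL, hL]
        conv_rhs => rw [← h]
        rw [mul_comm, map_add, map_mul, LinearMap.add_apply, Module.End.mul_apply, hqy, map_zero,
          add_zero]
    have h2 : FiniteDimensional ℂ (Polynomial.degreeLT ℂ (q.natDegree + 1)) :=
      (Polynomial.degreeLTEquiv ℂ (q.natDegree + 1)).symm.finiteDimensional
    exact Submodule.finiteDimensional_of_le this
  · constructor
    · rintro ⟨p, rfl⟩; exact ⟨p, rfl⟩
    · rintro ⟨p, rfl⟩; exact ⟨p, rfl⟩

end AlgebraPart

section AlgebraPart2

variable {G : Type*} [CommGroup G] {X : Type*} [AddCommGroup X] [Module ℂ X]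

lemma tau_comm (τ : Representation ℂ G X) (g h : G) (x : X) :
    τ g (τ h x) = τ h (τ g x) := by
  rw [← Module.End.mul_apply, ← map_mul, mul_comm, map_mul, Module.End.mul_apply]

lemma aeval_comm (τ : Representation ℂ G X) (g h : G) (p : Polynomial ℂ) (x : X) :
    Polynomial.aeval (τ h) p (τ g x) = τ g (Polynomial.aeval (τ h) p x) := by
  have h1 : Commute (τ g) (τ h) := by
    show τ g * τ h = τ h * τ g
    rw [← map_mul, mul_comm, map_mul]
  have h2 : Commute (τ g) (Polynomial.aeval (τ h) p) := by
    induction p using Polynomial.induction_on' with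
    | add p q hp hq => rw [map_add]; exact hp.add_right hq
    | monomial n a =>
      rw [Polynomial.aeval_monomial]
      exact (Algebra.commute_algebraMap_right a (τ g)).mul_right (h1.pow_right n)
  have := congrArg (fun f : Module.End ℂ X => f x) h2.eq
  simpa using this.symm

lemma inv_of_gen (τ : Representation ℂ G X) (O : Set G) (ϖ : G)
    (hgen : ∀ g : G, ∃ n : ℤ, ∃ u ∈ O, g = ϖ ^ n * u)
    (Z : Submodule ℂ X) (hsc : ∀ u ∈ O, ∃ c : ℂ, ∀ z ∈ Z, τ u z = c • z)
    (S : Submodule ℂ X) (hSZ : S ≤ Z) (h1 : ∀ x ∈ S, τ ϖ x ∈ S) (h2 : ∀ x ∈ S, τ ϖ⁻¹ x ∈ S) :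
    GRep.Invariant τ S := by
  have hp : ∀ (n : ℕ) (g : G), (∀ x ∈ S, τ g x ∈ S) → ∀ x ∈ S, τ (g ^ n) x ∈ S := by
    intro n g hg
    induction n with
    | zero => intro x hx; simpa using hx
    | succ n ih =>
      intro x hx
      rw [pow_succ, map_mul, Module.End.mul_apply]
      exact ih _ (hg x hx)
  intro g x hx
  obtain ⟨n, u, hu, rfl⟩ := hgen g
  obtain ⟨c, hc⟩ := hsc u hu
  rw [map_mul, Module.End.mul_apply, hc x (hSZ hx), map_smul]
  refine S.smul_mem _ ?_
  rcases Int.eq_nat_or_neg n with ⟨m, rfl | rfl⟩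
  · rw [zpow_natCast]; exact hp m _ h1 x hx
  · rw [zpow_neg, zpow_natCast, ← inv_pow]; exact hp m _ h2 x hx

lemma fd_of_scalar (τ : Representation ℂ G X) (r : Submodule ℂ X → ℕ) (n : ℕ)
    (hr : ∀ U V, GRep.Invariant τ U → GRep.Invariant τ V → U < V → r U < r V)
    (hb : ∀ U, r U ≤ n) (O : Set G) (ϖ : G)
    (hgen : ∀ g : G, ∃ n : ℤ, ∃ u ∈ O, g = ϖ ^ n * u)
    (Z : Submodule ℂ X) (hZ : GRep.Invariant τ Z)
    (hsc : ∀ u ∈ O, ∃ c : ℂ, ∀ z ∈ Z, τ u z = c • z) : FiniteDimensional ℂ Z := by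
  refine fd_of_local τ r n hr hb Z fun y hy => ?_
  set F := τ ϖ with hF
  have hFinv : ∀ x, F (τ ϖ⁻¹ x) = x := fun x => by
    rw [hF, ← Module.End.mul_apply, ← map_mul]; simp
  have hFinv' : ∀ x, τ ϖ⁻¹ (F x) = x := fun x => by
    rw [hF, ← Module.End.mul_apply, ← map_mul]; simp
  have hFZ : ∀ x ∈ Z, F x ∈ Z := fun x hx => hZ ϖ x hx
  have hpZ : ∀ (p : Polynomial ℂ), ∀ x ∈ Z, Polynomial.aeval F p x ∈ Z := by
    intro p x hx
    induction p using Polynomial.induction_on' with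
    | add p q hp hq => rw [map_add]; exact Z.add_mem hp hq
    | monomial n a =>
      rw [Polynomial.aeval_monomial, Module.End.mul_apply]
      refine Z.smul_mem a ?_
      rw [hF, ← map_pow]; exact hZ _ _ hx
  -- the Laurent span of `y`
  let C : Submodule ℂ X :=
    { carrier := {z | z ∈ Z ∧ ∃ (j : ℕ) (p : Polynomial ℂ), (F ^ j) z = Polynomial.aeval F p y}
      zero_mem' := ⟨Z.zero_mem, 0, 0, by simp⟩
      add_mem' := by
        rintro a b ⟨ha, j, p, hp⟩ ⟨hb, k, q, hq⟩
        refine ⟨Z.add_mem ha hb, j + k, Polynomial.X ^ k * p + Polynomial.X ^ j * q, ?_⟩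
        rw [map_add, map_add, LinearMap.add_apply, map_mul, map_mul, Module.End.mul_apply,
          Module.End.mul_apply, ← hp, ← hq, map_pow, map_pow, Polynomial.aeval_X,
          ← Module.End.mul_apply, ← Module.End.mul_apply, ← pow_add, ← pow_add, add_comm k j]
      smul_mem' := by
        rintro c z ⟨hz, j, p, hp⟩
        refine ⟨Z.smul_mem c hz, j, c • p, ?_⟩
        rw [map_smul, hp, map_smul, LinearMap.smul_apply] }
  have hCmem : ∀ z, z ∈ C ↔ z ∈ Z ∧ ∃ (j : ℕ) (p : Polynomial ℂ),
      (F ^ j) z = Polynomial.aeval F p y := fun z => Iff.rfl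
  have hCF : ∀ z ∈ C, F z ∈ C := by
    rintro z ⟨hz, j, p, hp⟩
    refine ⟨hFZ z hz, j, Polynomial.X * p, ?_⟩
    rw [map_mul, Module.End.mul_apply, ← hp, Polynomial.aeval_X, ← Module.End.mul_apply,
      ← Module.End.mul_apply, ← pow_succ, ← pow_succ']
  have hCinv : GRep.Invariant τ C := by
    refine inv_of_gen τ O ϖ hgen Z hsc C (fun z hz => hz.1) hCF ?_
    rintro z ⟨hz, j, p, hp⟩
    refine ⟨hZ _ _ hz, j + 1, p, ?_⟩
    rw [pow_succ, Module.End.mul_apply, hFinv, hp]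
  have hyC : y ∈ C := ⟨hy, 0, 1, by simp⟩
  obtain ⟨k, hk⟩ := chain_stab τ r hr C hCinv (F - 1)
    (fun g x => by
      rw [LinearMap.sub_apply, LinearMap.sub_apply, map_sub, Module.End.one_apply,
        Module.End.one_apply, hF, tau_comm])
    (fun z hz => C.sub_mem (hCF z hz) hz)
  obtain ⟨z, ⟨hz, j, p, hp⟩, hzk⟩ := hk y hyC
  let q : Polynomial ℂ := Polynomial.X ^ j * (Polynomial.X - 1) ^ k
    - p * (Polynomial.X - 1) ^ (k + 1)
  have hq0 : q ≠ 0 := by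
    intro h
    have h1 : (Polynomial.X - 1 : Polynomial ℂ) ^ k * (Polynomial.X ^ j
        - p * (Polynomial.X - 1)) = 0 := by
      rw [← h]; ring
    have hX : (Polynomial.X - 1 : Polynomial ℂ) ≠ 0 := Polynomial.X_sub_C_ne_zero (1 : ℂ)
    rcases mul_eq_zero.1 h1 with h2 | h2
    · exact pow_ne_zero k hX h2
    · have := congrArg (Polynomial.eval 1) h2
      simp at this
  have hae : Polynomial.aeval F (Polynomial.X - 1 : Polynomial ℂ) = F - 1 := by simp
  have hqy : Polynomial.aeval F q y = 0 := by
    simp only [q]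
    rw [map_sub, LinearMap.sub_apply, map_mul, map_pow, map_pow, hae, Polynomial.aeval_X,
      Module.End.mul_apply, hzk, mul_comm p, map_mul, map_pow, hae, Module.End.mul_apply, ← hp,
      ← Module.End.mul_apply, ← Module.End.mul_apply]
    have : Commute (F ^ j) ((F - 1) ^ (k + 1)) :=
      ((Commute.refl F).sub_right (Commute.one_right F)).pow_pow _ _
    rw [this.eq, sub_self]
  obtain ⟨S, hSfd, hyS, hS⟩ := poly_orbit_fd F y q hq0 hqy
  have hSF : ∀ x ∈ S, F x ∈ S := by
    intro x hx
    obtain ⟨p, rfl⟩ := (hS x).1 hx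
    exact (hS _).2 ⟨Polynomial.X * p, by
      rw [map_mul, Module.End.mul_apply, Polynomial.aeval_X]⟩
  have hSZ : S ≤ Z := by
    intro x hx
    obtain ⟨p, rfl⟩ := (hS x).1 hx
    exact hpZ p y hy
  refine ⟨S, inv_of_gen τ O ϖ hgen Z hsc S hSZ hSF ?_, hSZ, hyS, hSfd⟩
  intro x hx
  have hinj : Function.Injective (F.restrict hSF) := by
    intro a b hab
    apply Subtype.ext
    have h := congrArg (fun w : S => (w : X)) hab
    simp only [LinearMap.restrict_apply] at h
    rw [← hFinv' a, h, hFinv']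
  obtain ⟨w, hw⟩ := LinearMap.injective_iff_surjective.1 hinj ⟨x, hx⟩
  have h := congrArg (fun w : S => (w : X)) hw
  simp only [LinearMap.restrict_apply] at h
  rw [← h, hFinv']
  exact w.2

lemma fd_main (τ : Representation ℂ G X) (r : Submodule ℂ X → ℕ) (n : ℕ)
    (hr : ∀ U V, GRep.Invariant τ U → GRep.Invariant τ V → U < V → r U < r V)
    (hb : ∀ U, r U ≤ n) (O : Set G) (ϖ : G)
    (hgen : ∀ g : G, ∃ n : ℤ, ∃ u ∈ O, g = ϖ ^ n * u)
    (hAN : ∀ x : X, x ≠ 0 →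
      (∀ u ∈ O, ∀ θ : ℝ, τ u x = Complex.exp (θ * Complex.I) • x ∨
        ∃ g ∈ Submodule.span ℂ (Set.range fun l : G => τ l x),
          x = τ u g - Complex.exp (θ * Complex.I) • g) →
      ∀ u ∈ O, ∃ M : ℕ, 0 < M ∧ τ (u ^ M) x = x) : FiniteDimensional ℂ X := by
  by_contra hnot
  have hspan : ∀ x : X, GRep.Invariant τ (Submodule.span ℂ (Set.range fun l : G => τ l x)) := by
    intro x g v hv
    have : Submodule.span ℂ (Set.range fun l : G => τ l x) ≤
        (Submodule.span ℂ (Set.range fun l : G => τ l x)).comap (τ g) := by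
      refine Submodule.span_le.2 ?_
      rintro _ ⟨l, rfl⟩
      exact Submodule.subset_span ⟨g * l, by simp⟩
    exact this hv
  let P : ℕ → Prop := fun m => ∃ Z : Submodule ℂ X, GRep.Invariant τ Z ∧
    ¬ FiniteDimensional ℂ Z ∧ r Z = m
  have hP : ∃ m, P m := ⟨r ⊤, ⊤, fun g v _ => trivial, fun h => hnot (by
    exact (Submodule.topEquiv (R := ℂ) (M := X)).finiteDimensional), rfl⟩
  obtain ⟨Z, hZ, hZinf, hrZ⟩ := Nat.find_spec hP
  have hmin : ∀ U, GRep.Invariant τ U → U ≤ Z → ¬ FiniteDimensional ℂ U → U = Z := by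
    intro U hU hUZ hUinf
    by_contra hne
    have h1 := hr U Z hU hZ (lt_of_le_of_ne hUZ hne)
    rw [hrZ] at h1
    exact Nat.find_min hP h1 ⟨U, hU, hUinf, rfl⟩
  have hdich : ∀ (u : G) (c : ℂ), (∀ z ∈ Z, τ u z = c • z) ∨
      (∀ z ∈ Z, ∃ w ∈ Z, z = τ u w - c • w) := by
    intro u c
    let D : Module.End ℂ X := τ u - c • LinearMap.id
    have hD : ∀ x, D x = τ u x - c • x := fun x => rfl
    have hDc : ∀ g x, D (τ g x) = τ g (D x) := by
      intro g x; rw [hD, hD, map_sub, map_smul, tau_comm]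
    by_cases hfd : FiniteDimensional ℂ (Z.map D)
    · left
      let Kr : Submodule ℂ X := Z ⊓ LinearMap.ker D
      have hKr : Kr = Z := by
        apply hmin
        · rintro g v ⟨h1, h2⟩
          refine ⟨hZ g v h1, ?_⟩
          rw [SetLike.mem_coe, LinearMap.mem_ker] at h2 ⊢
          rw [hDc, h2, map_zero]
        · exact inf_le_left
        · intro hK
          apply hZinf
          let D' := D.domRestrict Z
          have e1 : FiniteDimensional ℂ (LinearMap.range D') := by
            have : LinearMap.range D' = Z.map D := by
              ext x; simp [D', LinearMap.mem_range]
            rw [this]; exact hfd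
          have e2 : FiniteDimensional ℂ (LinearMap.ker D') := by
            have hm : (LinearMap.ker D').map Z.subtype ≤ Kr := by
              rintro _ ⟨z, hz, rfl⟩
              exact ⟨z.2, hz⟩
            have h3 : FiniteDimensional ℂ ((LinearMap.ker D').map Z.subtype) :=
              Submodule.finiteDimensional_of_le hm
            exact (Submodule.equivMapOfInjective Z.subtype Z.injective_subtype
              (LinearMap.ker D')).symm.finiteDimensional
          have e3 : FiniteDimensional ℂ (Z ⧸ LinearMap.ker D') :=
            D'.quotKerEquivRange.symm.finiteDimensional
          exact Module.Finite.of_submodule_quotient (LinearMap.ker D')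
      intro z hz
      rw [← hKr] at hz
      have := hz.2
      rw [SetLike.mem_coe, LinearMap.mem_ker, hD, sub_eq_zero] at this
      exact this
    · right
      have hm : Z.map D = Z := by
        apply hmin _ _ _ hfd
        · rintro g _ ⟨z, hz, rfl⟩
          exact ⟨τ g z, hZ g z hz, hDc g z⟩
        · rintro _ ⟨z, hz, rfl⟩
          exact Z.sub_mem (hZ u z hz) (Z.smul_mem c hz)
      intro z hz
      rw [← hm] at hz
      obtain ⟨w, hw, rfl⟩ := hz
      exact ⟨w, hw, rfl⟩
  -- a generator
  obtain ⟨y, hyZ, hy⟩ : ∃ y ∈ Z, Submodule.span ℂ (Set.range fun l : G => τ l y) = Z := by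
    by_contra hcon
    push Not at hcon
    apply hZinf
    refine fd_of_local τ r n hr hb Z fun y hy => ?_
    have hle : Submodule.span ℂ (Set.range fun l : G => τ l y) ≤ Z := by
      refine Submodule.span_le.2 ?_
      rintro _ ⟨l, rfl⟩
      exact hZ l y hy
    refine ⟨_, hspan y, hle, Submodule.subset_span ⟨1, by simp⟩, ?_⟩
    by_contra hinf
    exact hcon y hy (hmin _ (hspan y) hle hinf)
  have hZ0 : Z ≠ ⊥ := by
    rintro rfl
    exact hZinf inferInstance
  have hy0 : y ≠ 0 := by
    rintro rfl
    apply hZ0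
    rw [← hy, Submodule.span_eq_bot]
    rintro _ ⟨l, rfl⟩
    simp
  have hfin := hAN y hy0 (fun u _ θ => by
    rcases hdich u (Complex.exp (θ * Complex.I)) with h | h
    · exact Or.inl (h y hyZ)
    · obtain ⟨w, hw, he⟩ := h y hyZ
      exact Or.inr ⟨w, by rw [hy]; exact hw, he⟩)
  apply hZinf
  refine fd_of_scalar τ r n hr hb O ϖ hgen Z hZ fun u hu => ?_
  obtain ⟨M, hM, hMy⟩ := hfin u hu
  have hMZ : ∀ z ∈ Z, (τ u ^ M) z = z := by
    have : Z ≤ LinearMap.eqLocus (τ u ^ M) LinearMap.id := by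
      rw [← hy]
      refine Submodule.span_le.2 ?_
      rintro _ ⟨l, rfl⟩
      show (τ u ^ M) (τ l y) = τ l y
      rw [← map_pow, tau_comm, hMy]
    exact fun z hz => this hz
  by_contra hcon
  push Not at hcon
  have hsurj : ∀ c : ℂ, ∀ z ∈ Z, ∃ w ∈ Z, z = τ u w - c • w := by
    intro c
    rcases hdich u c with h | h
    · obtain ⟨z, hz, hne⟩ := hcon c
      exact absurd (h z hz) hne
    · exact h
  have hprod : ∀ s : Multiset ℂ, ∀ z ∈ Z, ∃ w ∈ Z, z = Polynomial.aeval (τ u)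
      ((s.map fun a => Polynomial.X - Polynomial.C a).prod) w := by
    intro s
    induction s using Multiset.induction_on with
    | empty => intro z hz; exact ⟨z, hz, by simp⟩
    | cons a s ih =>
      intro z hz
      obtain ⟨w, hw, rfl⟩ := hsurj a z hz
      obtain ⟨v, hv, rfl⟩ := ih w hw
      refine ⟨v, hv, ?_⟩
      rw [Multiset.map_cons, Multiset.prod_cons, map_mul, Module.End.mul_apply]
      simp [Algebra.smul_def]
  have hpoly : (Polynomial.X ^ M - 1 : Polynomial ℂ) =
      (((Polynomial.X ^ M - 1 : Polynomial ℂ).roots).map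
        fun a => Polynomial.X - Polynomial.C a).prod := by
    have hmon : (Polynomial.X ^ M - 1 : Polynomial ℂ).Monic := by
      simpa using Polynomial.monic_X_pow_sub_C (1 : ℂ) hM.ne'
    have hs := IsAlgClosed.splits (Polynomial.X ^ M - 1 : Polynomial ℂ)
    have := hs.eq_prod_roots
    rw [hmon.leadingCoeff] at this
    simpa using this
  obtain ⟨z, hz, hzne⟩ := Submodule.exists_mem_ne_zero_of_ne_bot hZ0
  obtain ⟨w, hw, he⟩ := hprod (Polynomial.X ^ M - 1 : Polynomial ℂ).roots z hz
  rw [← hpoly] at he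
  apply hzne
  rw [he]
  simp [hMZ w hw]

/-- Fitting-type lemma for a commuting family of semisimple operators. -/
lemma fitting_family {ι : Type*} [FiniteDimensional ℂ X] (D : ι → Module.End ℂ X)
    (hcomm : ∀ i j x, D i (D j x) = D j (D i x))
    (hss : ∀ i x, D i (D i x) = 0 → D i x = 0) (N : Submodule ℂ X)
    (hN : ∀ i x, D i x ∈ N) (x : X) : ∃ y, (∀ i, D i y = 0) ∧ x - y ∈ N := by
  let P : ℕ → Prop := fun m => ∃ Z : Submodule ℂ X, (∀ i, ∀ z ∈ Z, D i z ∈ Z) ∧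
    (∀ x, ∃ z ∈ Z, x - z ∈ N) ∧ Module.finrank ℂ Z = m
  have hP : ∃ m, P m := ⟨_, ⊤, fun _ _ _ => trivial, fun x => ⟨x, trivial, by simp⟩, rfl⟩
  obtain ⟨Z, hZ, hZN, hrZ⟩ := Nat.find_spec hP
  obtain ⟨z, hz, hxz⟩ := hZN x
  refine ⟨z, fun i => ?_, hxz⟩
  let Z' : Submodule ℂ X := Z ⊓ LinearMap.ker (D i)
  have hZ' : Z' = Z := by
    by_contra hne
    have hlt : Z' < Z := lt_of_le_of_ne inf_le_left hne
    have h1 := Submodule.finrank_lt_finrank_of_lt hlt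
    rw [hrZ] at h1
    refine Nat.find_min hP h1 ⟨Z', ?_, ?_, rfl⟩
    · rintro j w ⟨hw, hk⟩
      refine ⟨hZ j w hw, ?_⟩
      rw [SetLike.mem_coe, LinearMap.mem_ker] at hk ⊢
      rw [hcomm, hk, map_zero]
    · intro x
      obtain ⟨w, hw, hxw⟩ := hZN x
      let E := (D i).restrict (hZ i)
      have hE : ∀ v : Z, ((E v : Z) : X) = D i v := fun v => rfl
      have hdisj : Disjoint (LinearMap.ker E) (LinearMap.range E) := by
        rw [Submodule.disjoint_def]
        rintro _ hk ⟨v, rfl⟩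
        rw [LinearMap.mem_ker] at hk
        apply Subtype.ext
        have := congrArg (fun w : Z => (w : X)) hk
        simp only [hE] at this
        exact hss i _ this
      have htop : LinearMap.ker E ⊔ LinearMap.range E = ⊤ := by
        apply Submodule.eq_top_of_finrank_eq
        have e1 := Submodule.finrank_sup_add_finrank_inf_eq (LinearMap.ker E) (LinearMap.range E)
        rw [hdisj.eq_bot, finrank_bot] at e1
        have e2 := LinearMap.finrank_range_add_finrank_ker E
        omega
      have hwt : (⟨w, hw⟩ : Z) ∈ LinearMap.ker E ⊔ LinearMap.range E := by rw [htop]; trivial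
      obtain ⟨a, ha, _, ⟨b, rfl⟩, hab⟩ := Submodule.mem_sup.1 hwt
      have hab' := congrArg (fun w : Z => (w : X)) hab
      simp only [Submodule.coe_add, hE] at hab'
      refine ⟨a, ⟨a.2, ?_⟩, ?_⟩
      · rw [SetLike.mem_coe, LinearMap.mem_ker, ← hE, LinearMap.mem_ker.1 ha]; rfl
      · have : x - (a : X) = (x - w) + D i b := by rw [← hab']; abel
        rw [this]
        exact N.add_mem hxw (hN i _)
  rw [← hZ'] at hz
  exact hz.2

end AlgebraPart2

section AbstractArc

variable {V : Type*} [AddCommGroup V] [Module ℂ V]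

lemma semis (g : Module.End ℂ V) (c : ℂ) (v : V) (r : ℕ) (hr : 0 < r) (h : (g ^ r) v = v)
    (h2 : g (g v - c • v) = c • (g v - c • v)) : g v = c • v := by
  set y := g v - c • v with hy
  have hgv : g v = c • v + y := by rw [hy]; abel
  have key : ∀ k : ℕ, (g ^ (k + 1)) v = c ^ (k + 1) • v + ((k + 1 : ℕ) * c ^ k) • y := by
    intro k
    induction k with
    | zero => simp [hgv]
    | succ k ih =>
      rw [pow_succ', Module.End.mul_apply, ih, map_add, map_smul, map_smul, h2, hgv]
      push_cast
      module
  obtain ⟨k, rfl⟩ : ∃ k, r = k + 1 := ⟨r - 1, by omega⟩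
  have e1 := key k
  rw [h] at e1
  have hcomm : ∀ n : ℕ, (g ^ n) y = c ^ n • y := by
    intro n
    induction n with
    | zero => simp
    | succ n ih => rw [pow_succ', Module.End.mul_apply, ih, map_smul, h2, smul_smul, pow_succ]
  have e2 : (g ^ (k + 1)) y = y := by
    rw [hy, map_sub, map_smul, h, ← Module.End.mul_apply, ← pow_succ, pow_succ',
      Module.End.mul_apply, h]
  rw [hcomm] at e2
  have hy0 : y = 0 := by
    by_contra hne
    have hc : c ^ (k + 1) = 1 := by
      have : (c ^ (k + 1) - 1) • y = 0 := by rw [sub_smul, e2, one_smul, sub_self]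
      rcases smul_eq_zero.1 this with h | h
      · exact sub_eq_zero.1 h
      · exact absurd h hne
    rw [hc, one_smul] at e1
    have h3 : ((k + 1 : ℕ) * c ^ k : ℂ) • y = 0 := by
      have := e1.symm
      rwa [add_eq_left] at this
    rcases smul_eq_zero.1 h3 with h | h
    · rcases mul_eq_zero.1 h with h | h
      · exact absurd h (by exact_mod_cast Nat.succ_ne_zero k)
      · rw [pow_succ, h, zero_mul] at hc
        exact zero_ne_one hc
    · exact hne h
  rw [hgv, hy0, add_zero]

lemma exists_eig (g : Module.End ℂ V) (H : Submodule ℂ V) (hH : ∀ v ∈ H, g v ∈ H) (v : V)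
    (hv : v ∈ H) (hne : v ≠ 0) (r : ℕ) (hr : 0 < r) (h : (g ^ r) v = v) :
    ∃ y ∈ H, y ≠ 0 ∧ ∃ b : ℂ, b ^ r = 1 ∧ g y = b • y := by
  have hpoly : (Polynomial.X ^ r - 1 : Polynomial ℂ) =
      (((Polynomial.X ^ r - 1 : Polynomial ℂ).roots).map
        fun a => Polynomial.X - Polynomial.C a).prod := by
    have hmon : (Polynomial.X ^ r - 1 : Polynomial ℂ).Monic := by
      simpa using Polynomial.monic_X_pow_sub_C (1 : ℂ) hr.ne'
    have hs := IsAlgClosed.splits (Polynomial.X ^ r - 1 : Polynomial ℂ)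
    have := hs.eq_prod_roots
    rw [hmon.leadingCoeff] at this
    simpa using this
  have hz : Polynomial.aeval g (Polynomial.X ^ r - 1 : Polynomial ℂ) v = 0 := by
    simp [h]
  rw [hpoly] at hz
  have gen : ∀ s : Multiset ℂ, (∀ a ∈ s, a ^ r = 1) → ∀ v ∈ H, v ≠ 0 →
      Polynomial.aeval g ((s.map fun a => Polynomial.X - Polynomial.C a).prod) v = 0 →
      ∃ y ∈ H, y ≠ 0 ∧ ∃ b : ℂ, b ^ r = 1 ∧ g y = b • y := by
    intro s
    induction s using Multiset.induction_on with
    | empty => intro _ v _ hne h0; exact absurd (by simpa using h0) hne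
    | cons a s ih =>
      intro hs v hv hne h0
      rw [Multiset.map_cons, Multiset.prod_cons, mul_comm, map_mul, Module.End.mul_apply] at h0
      have e : Polynomial.aeval g (Polynomial.X - Polynomial.C a) v = g v - a • v := by simp
      rw [e] at h0
      by_cases h1 : g v - a • v = 0
      · exact ⟨v, hv, hne, a, hs a (Multiset.mem_cons_self a s), sub_eq_zero.1 h1⟩
      · exact ih (fun b hb => hs b (Multiset.mem_cons_of_mem hb)) _
          (H.sub_mem (hH v hv) (H.smul_mem a hv)) h1 h0
  refine gen _ (fun a ha => ?_) v hv hne hz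
  have := Polynomial.isRoot_of_mem_roots ha
  simpa [Polynomial.IsRoot, sub_eq_zero] using this

lemma arc_hit (a b : ℂ) (r : ℕ) (hr : 0 < r) (ha : a ^ r = 1) (hb : b ^ r = 1)
    (θ₀ δ : ℝ) (hδ : 0 < δ) (D : ℕ) (hD : 2 * Real.pi / δ ≤ D) (hM : b ^ (D.factorial) ≠ 1) :
    ∃ (j : ℕ) (θ : ℝ), |θ - θ₀| < δ ∧ a * b ^ j = Complex.exp (θ * Complex.I) := by
  set d := orderOf b with hd
  have hdpos : 0 < d := orderOf_pos_iff.2 (isOfFinOrder_iff_pow_eq_one.2 ⟨r, hr, hb⟩)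
  have hprim : IsPrimitiveRoot b d := IsPrimitiveRoot.orderOf b
  have hDd : D < d := by
    by_contra hle
    push Not at hle
    exact hM (orderOf_dvd_iff_pow_eq_one.1 (Nat.dvd_factorial hdpos hle))
  have hna : ‖a‖ = 1 := Complex.norm_eq_one_of_pow_eq_one ha hr.ne'
  have hae : a = Complex.exp (a.arg * Complex.I) := by
    have := Complex.norm_mul_exp_arg_mul_I a
    rw [hna] at this
    simpa using this.symm
  have hdR : (0 : ℝ) < d := by exact_mod_cast hdpos
  have hpi := Real.pi_pos
  let l : ℤ := round ((θ₀ - a.arg) * d / (2 * Real.pi))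
  have hl := abs_sub_round ((θ₀ - a.arg) * d / (2 * Real.pi))
  have hroot : (Complex.exp (2 * Real.pi * l / d * Complex.I)) ^ d = 1 := by
    rw [← Complex.exp_nat_mul]
    have : (d : ℂ) * (2 * Real.pi * l / d * Complex.I) = l * (2 * Real.pi * Complex.I) := by
      have : (d : ℂ) ≠ 0 := by exact_mod_cast hdpos.ne'
      field_simp
    rw [this, Complex.exp_int_mul_two_pi_mul_I]
  have : NeZero d := ⟨hdpos.ne'⟩
  obtain ⟨j, _, hj⟩ := hprim.eq_pow_of_pow_eq_one hroot
  refine ⟨j, a.arg + 2 * Real.pi * l / d, ?_, ?_⟩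
  · have e : a.arg + 2 * Real.pi * l / d - θ₀ =
        -(((θ₀ - a.arg) * d / (2 * Real.pi) - l) * (2 * Real.pi / d)) := by
      field_simp
      ring
    rw [e, abs_neg, abs_mul, abs_of_pos (by positivity : 0 < 2 * Real.pi / (d : ℝ))]
    have h1 : |(θ₀ - a.arg) * d / (2 * Real.pi) - l| * (2 * Real.pi / d)
        ≤ 1 / 2 * (2 * Real.pi / d) := by gcongr
    refine h1.trans_lt ?_
    have h2 : 2 * Real.pi < δ * d := by
      have : 2 * Real.pi / δ < d := lt_of_le_of_lt hD (by exact_mod_cast hDd)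
      rw [div_lt_iff₀ hδ] at this
      linarith
    have h3 : 2 * Real.pi / d < δ := by rw [div_lt_iff₀ hdR]; exact h2
    have h4 : 0 < 2 * Real.pi / (d : ℝ) := by positivity
    linarith
  · rw [hj]
    conv_lhs => rw [hae]
    rw [← Complex.exp_add]
    congr 1
    push_cast
    ring

lemma arc_main (u w : Module.End ℂ V) (huw : ∀ v, u (w v) = w (u v))
    (hu : ∀ v, ∃ r : ℕ, 0 < r ∧ (u ^ r) v = v) (hw : ∀ v, ∃ r : ℕ, 0 < r ∧ (w ^ r) v = v)
    (θ₀ δ : ℝ) (hδ : 0 < δ) (D : ℕ) (hD : 2 * Real.pi / δ ≤ D) (φ : V)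
    (hφ : ∀ (j : ℕ) (θ : ℝ), |θ - θ₀| < δ → ∃ G, φ = w ((u ^ j) G)
      - Complex.exp (θ * Complex.I) • G) : (u ^ D.factorial) φ = φ := by
  have hcw : Commute u w := LinearMap.ext huw
  set M := D.factorial with hM
  let H : Submodule ℂ V :=
    { carrier := {φ | ∀ (j : ℕ) (θ : ℝ), |θ - θ₀| < δ → ∃ G, φ = w ((u ^ j) G)
        - Complex.exp (θ * Complex.I) • G}
      zero_mem' := fun j θ _ => ⟨0, by simp⟩
      add_mem' := by
        intro a b ha hb j θ h
        obtain ⟨G, hG⟩ := ha j θ h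
        obtain ⟨G', hG'⟩ := hb j θ h
        refine ⟨G + G', ?_⟩
        rw [map_add, map_add, smul_add, add_sub_add_comm, ← hG, ← hG']
      smul_mem' := by
        intro c a ha j θ h
        obtain ⟨G, hG⟩ := ha j θ h
        refine ⟨c • G, ?_⟩
        rw [map_smul, map_smul, smul_comm _ c, ← smul_sub, ← hG] }
  have huj : ∀ (j : ℕ) v, (u ^ j) (u v) = u ((u ^ j) v) := by
    intro j v
    rw [← Module.End.mul_apply, ← Module.End.mul_apply, ← pow_succ, ← pow_succ']
  have hwj : ∀ (j : ℕ) v, (u ^ j) (w v) = w ((u ^ j) v) := by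
    intro j v
    exact congrArg (fun f : Module.End ℂ V => f v) (hcw.pow_left j).eq
  have hHu : ∀ v ∈ H, u v ∈ H := by
    intro v hv j θ h
    obtain ⟨G, hG⟩ := hv j θ h
    refine ⟨u G, ?_⟩
    rw [huj, ← huw, ← map_smul, ← map_sub, ← hG]
  have hHw : ∀ v ∈ H, w v ∈ H := by
    intro v hv j θ h
    obtain ⟨G, hG⟩ := hv j θ h
    refine ⟨w G, ?_⟩
    rw [hwj, ← map_smul, ← map_sub, ← hG]
  have hHuk : ∀ (k : ℕ), ∀ v ∈ H, (u ^ k) v ∈ H := by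
    intro k
    induction k with
    | zero => intro v hv; simpa using hv
    | succ k ih => intro v hv; rw [pow_succ, Module.End.mul_apply]; exact ih _ (hHu v hv)
  by_contra hcon
  -- the submodule of elements `(u^M - 1) z`
  let N : Submodule ℂ V := H.map (u ^ M - 1)
  have hNu : ∀ v ∈ N, u v ∈ N := by
    rintro _ ⟨v, hv, rfl⟩
    refine ⟨u v, hHu v hv, ?_⟩
    simp only [LinearMap.sub_apply, Module.End.one_apply, map_sub, huj]
  have hNw : ∀ v ∈ N, w v ∈ N := by
    rintro _ ⟨v, hv, rfl⟩
    refine ⟨w v, hHw v hv, ?_⟩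
    simp only [LinearMap.sub_apply, Module.End.one_apply, map_sub, hwj]
  have hφN : (u ^ M - 1) φ ∈ N := ⟨φ, hφ, rfl⟩
  have hφne : (u ^ M - 1) φ ≠ 0 := by
    rw [LinearMap.sub_apply, Module.End.one_apply]
    exact fun h => hcon (sub_eq_zero.1 h)
  obtain ⟨r, hr, hrφ⟩ := hu ((u ^ M - 1) φ)
  obtain ⟨y, hyN, hy0, b, hb, hby⟩ := exists_eig u N hNu _ hφN hφne r hr hrφ
  obtain ⟨r', hr', hrφ'⟩ := hw y
  let N' : Submodule ℂ V := N ⊓ LinearMap.ker (u - b • 1)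
  obtain ⟨z, ⟨hzN, hzk⟩, hz0, a, ha, haz⟩ := exists_eig w N' (by
    rintro v ⟨h1, h2⟩
    refine ⟨hNw v h1, ?_⟩
    rw [SetLike.mem_coe, LinearMap.mem_ker] at h2 ⊢
    simp only [LinearMap.sub_apply, LinearMap.smul_apply, Module.End.one_apply] at h2 ⊢
    rw [huw, ← map_smul, ← map_sub, h2, map_zero]) y
    ⟨hyN, by simp [hby]⟩ hy0 r' hr' hrφ'
  have hbz : u z = b • z := by
    rw [SetLike.mem_coe, LinearMap.mem_ker] at hzk
    simpa [sub_eq_zero] using hzk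
  have hbzj : ∀ j : ℕ, (u ^ j) z = b ^ j • z := by
    intro j
    induction j with
    | zero => simp
    | succ j ih => rw [pow_succ', Module.End.mul_apply, ih, map_smul, hbz, smul_smul, pow_succ]
  have hzH : z ∈ H := by
    obtain ⟨v, hv, rfl⟩ := hzN
    exact H.sub_mem (hHuk M v hv) hv
  by_cases hbM : b ^ M = 1
  · obtain ⟨v, hv, hvz⟩ := hzN
    simp only [LinearMap.sub_apply, Module.End.one_apply] at hvz
    obtain ⟨k, hk, hkv⟩ := hu v
    have := semis (u ^ M) 1 v k hk (by
      rw [← pow_mul, mul_comm, pow_mul]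
      have : ∀ n : ℕ, ((u ^ k) ^ n) v = v := by
        intro n
        induction n with
        | zero => simp
        | succ n ih => rw [pow_succ, Module.End.mul_apply, hkv, ih]
      exact this M) (by rw [one_smul, one_smul, hvz, hbzj, hbM, one_smul])
    rw [one_smul] at this
    rw [this, sub_self] at hvz
    exact hz0 hvz.symm
  · have ha' : a ^ (r * r') = 1 := by rw [mul_comm, pow_mul, ha, one_pow]
    have hb' : b ^ (r * r') = 1 := by rw [pow_mul, hb, one_pow]
    obtain ⟨j, θ, hθ, he⟩ := arc_hit a b (r * r') (Nat.mul_pos hr hr') ha' hb' θ₀ δ hδ D hD hbM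
    obtain ⟨G, hG⟩ := hzH j θ hθ
    rw [← he] at hG
    obtain ⟨k, hk, hkG⟩ := hu G
    obtain ⟨k', hk', hkG'⟩ := hw G
    have i1 : ∀ n : ℕ, ((u ^ k) ^ n) G = G := by
      intro n
      induction n with
      | zero => simp
      | succ n ih => rw [pow_succ, Module.End.mul_apply, hkG, ih]
    have i2 : ∀ n : ℕ, ((w ^ k') ^ n) G = G := by
      intro n
      induction n with
      | zero => simp
      | succ n ih => rw [pow_succ, Module.End.mul_apply, hkG', ih]
    have hfin : ((w * u ^ j) ^ (k * k')) G = G := by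
      rw [((hcw.pow_left j).symm).mul_pow, Module.End.mul_apply, ← pow_mul,
        show j * (k * k') = k * (j * k') by ring, pow_mul u, i1, mul_comm k k', pow_mul w, i2]
    have := semis (w * u ^ j) (a * b ^ j) G (k * k') (Nat.mul_pos hk hk') hfin (by
      rw [Module.End.mul_apply, Module.End.mul_apply, ← hG, hbzj, map_smul, haz, smul_smul,
        mul_comm])
    rw [Module.End.mul_apply] at this
    rw [this, sub_self] at hG
    exact hz0 hG

end AbstractArc

set_option linter.unusedSectionVars false
section TopologyPart

variable {K : Type*} [NontriviallyNormedField K] [IsUltrametricDist K] [ProperSpace K]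

lemma annulus_compact (a b : ℝ) (ha : 0 < a) :
    IsCompact {x : Kˣ | a ≤ ‖(x : K)‖ ∧ ‖(x : K)‖ ≤ b} := by
  have hemb : Topology.IsEmbedding (Units.val : Kˣ → K) := Units.isEmbedding_val₀
  rw [hemb.isCompact_iff]
  have : Units.val '' {x : Kˣ | a ≤ ‖(x : K)‖ ∧ ‖(x : K)‖ ≤ b} =
      Metric.closedBall (0 : K) b ∩ {x : K | a ≤ ‖x‖} := by
    ext x
    constructor
    · rintro ⟨y, hy, rfl⟩
      exact ⟨by simpa using hy.2, hy.1⟩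
    · rintro ⟨h1, h2⟩
      have hx : x ≠ 0 := by
        rintro rfl
        simp at h2
        linarith
      exact ⟨Units.mk0 x hx, ⟨h2, by simpa using h1⟩, rfl⟩
  rw [this]
  exact (isCompact_closedBall (0 : K) b).inter_right (isClosed_le continuous_const continuous_norm)

lemma shell_compact (a : ℝ) (ha : 0 < a) : IsCompact {x : Kˣ | ‖(x : K)‖ = a} := by
  convert annulus_compact (K := K) a a ha using 1
  ext x
  simp only [Set.mem_ofPred_eq]
  exact ⟨fun h => ⟨h.ge, h.le⟩, fun h => le_antisymm h.2 h.1⟩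

lemma norm_cont : Continuous fun x : Kˣ => ‖(x : K)‖ := Units.continuous_val.norm

lemma ball_nhds (N : Set Kˣ) (hN : N ∈ nhds (1 : Kˣ)) :
    ∃ ε : ℝ, 0 < ε ∧ ε ≤ 1 ∧ ∀ v : Kˣ, ‖(v : K) - 1‖ < ε → v ∈ N := by
  have hemb : Topology.IsEmbedding (Units.val : Kˣ → K) := Units.isEmbedding_val₀
  rw [hemb.nhds_eq_comap, Filter.mem_comap] at hN
  obtain ⟨t, ht, htN⟩ := hN
  obtain ⟨ε, hε, hb⟩ := Metric.mem_nhds_iff.1 ht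
  refine ⟨min ε 1, lt_min hε one_pos, min_le_right _ _, fun v hv => htN (hb ?_)⟩
  rw [Metric.mem_ball, dist_eq_norm]
  simpa using hv.trans_le (min_le_left _ _)

lemma ball_mul {ε : ℝ} (hε1 : ε ≤ 1) (v w : Kˣ) (hv : ‖(v : K) - 1‖ < ε)
    (hw : ‖(w : K) - 1‖ < ε) : ‖((v * w : Kˣ) : K) - 1‖ < ε := by
  have h1 : ((v * w : Kˣ) : K) - 1 = (v - 1) * (w - 1) + ((v - 1) + (w - 1)) := by
    push_cast; ring
  rw [h1]
  refine (IsUltrametricDist.norm_add_le_max _ _).trans_lt (max_lt ?_ ?_)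
  · rw [norm_mul]
    calc ‖(v : K) - 1‖ * ‖(w : K) - 1‖ ≤ ‖(v : K) - 1‖ * 1 := by
          gcongr; exact hw.le.trans hε1
      _ < ε := by rw [mul_one]; exact hv
  · exact (IsUltrametricDist.norm_add_le_max _ _).trans_lt (max_lt hv hw)

lemma ball_pow {ε : ℝ} (hε : 0 < ε) (hε1 : ε ≤ 1) (v : Kˣ) (hv : ‖(v : K) - 1‖ < ε) (j : ℕ) :
    ‖((v ^ j : Kˣ) : K) - 1‖ < ε := by
  induction j with
  | zero => simpa using hε
  | succ j ih => rw [pow_succ]; exact ball_mul hε1 _ _ ih hv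

lemma ball_norm {ε : ℝ} (hε1 : ε ≤ 1) (v : Kˣ) (hv : ‖(v : K) - 1‖ < ε) : ‖(v : K)‖ = 1 := by
  have h : ‖(v : K) - 1‖ < ‖(1 : K)‖ := by rw [norm_one]; exact hv.trans_le hε1
  have h2 := IsUltrametricDist.norm_add_eq_max_of_norm_ne_norm (x := (v : K) - 1) (y := 1) h.ne
  rw [sub_add_cancel, max_eq_right h.le, norm_one] at h2
  exact h2

lemma pow_mem_nhds (u : Kˣ) (hu : ‖(u : K)‖ = 1) (N : Set Kˣ) (hN : N ∈ nhds (1 : Kˣ)) :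
    ∃ r : ℕ, 0 < r ∧ u ^ r ∈ N := by
  obtain ⟨ε, hε, -, hb⟩ := ball_nhds N hN
  have hx : ∀ n : ℕ, (u : K) ^ n ∈ Metric.closedBall (0 : K) 1 := by
    intro n; simp [hu]
  obtain ⟨a, _, φ, hφ, hlim⟩ := (isCompact_closedBall (0 : K) 1).tendsto_subseq hx
  obtain ⟨n, hn⟩ := Metric.cauchySeq_iff.1 hlim.cauchySeq ε hε
  have h := hn (n + 1) (by omega) n le_rfl
  have hlt : φ n < φ (n + 1) := hφ (by omega)
  refine ⟨φ (n + 1) - φ n, by omega, hb _ ?_⟩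
  rw [dist_eq_norm] at h
  have e : (u : K) ^ φ (n + 1) - (u : K) ^ φ n =
      (u : K) ^ φ n * ((u : K) ^ (φ (n + 1) - φ n) - 1) := by
    rw [mul_sub, ← pow_add, mul_one]
    congr 2
    omega
  simp only [Function.comp] at h
  rw [e, norm_mul, norm_pow, hu, one_pow, one_mul] at h
  simpa using h

lemma loc_const_tube (f : Kˣ → ℂ) (hf : IsLocallyConstant f) (C : Set Kˣ) (hC : IsCompact C) :
    {v : Kˣ | ∀ x ∈ C, f (x * v) = f x} ∈ nhds (1 : Kˣ) := by
  have hopen : IsOpen {p : Kˣ × Kˣ | f (p.1 * p.2) = f p.1} := by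
    have h1 : IsLocallyConstant fun p : Kˣ × Kˣ => f (p.1 * p.2) :=
      hf.comp_continuous continuous_mul
    have h2 : IsLocallyConstant fun p : Kˣ × Kˣ => f p.1 := hf.comp_continuous continuous_fst
    have h3 : IsLocallyConstant fun p : Kˣ × Kˣ => f (p.1 * p.2) - f p.1 :=
      h1.comp₂ h2 (· - ·)
    convert h3.isOpen_fiber 0 using 1
    ext p
    simp [sub_eq_zero]
  obtain ⟨s, t, _, ht, hs, h1, hst⟩ := generalized_tube_lemma hC (isCompact_singleton (x := (1 : Kˣ)))
    hopen (by
      rintro ⟨x, y⟩ ⟨_, hy⟩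
      rw [Set.mem_singleton_iff] at hy
      simp only at hy
      simp [hy])
  refine Filter.mem_of_superset (ht.mem_nhds (h1 rfl)) fun v hv x hx => ?_
  exact hst (Set.mk_mem_prod (hs hx) hv)

/-- Right translation on functions. -/
def tr (u : Kˣ) : Module.End ℂ (Kˣ → ℂ) where
  toFun g := fun x => g (x * u)
  map_add' _ _ := rfl
  map_smul' _ _ := rfl

/-- Locally constant functions supported on a shell. -/
def Sh (K : Type*) [NontriviallyNormedField K] (a : ℝ) : Submodule ℂ (Kˣ → ℂ) where
  carrier := {g | IsLocallyConstant g ∧ ∀ x : Kˣ, ‖(x : K)‖ ≠ a → g x = 0}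
  zero_mem' := ⟨IsLocallyConstant.const 0, fun _ _ => rfl⟩
  add_mem' {g h} hg hh := ⟨hg.1.comp₂ hh.1 (· + ·), fun x hx => by
    simp [hg.2 x hx, hh.2 x hx]⟩
  smul_mem' c g hg := ⟨hg.1.comp (fun z => c * z), fun x hx => by simp [hg.2 x hx]⟩

lemma norm_mul_unit (u : Kˣ) (hu : ‖(u : K)‖ = 1) (x : Kˣ) : ‖((x * u : Kˣ) : K)‖ = ‖(x : K)‖ := by
  rw [Units.val_mul, norm_mul, hu, mul_one]

lemma tr_Sh (a : ℝ) (u : Kˣ) (hu : ‖(u : K)‖ = 1) : ∀ g ∈ Sh K a, tr u g ∈ Sh K a := by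
  rintro g ⟨h1, h2⟩
  refine ⟨h1.comp_continuous (continuous_mul_const u), fun x hx => h2 _ ?_⟩
  rwa [norm_mul_unit u hu]

/-- Translation on a shell space. -/
def trS (a : ℝ) (u : Kˣ) (hu : ‖(u : K)‖ = 1) : Module.End ℂ (Sh K a) :=
  (tr u).restrict (tr_Sh a u hu)

lemma trS_apply (a : ℝ) (u : Kˣ) (hu : ‖(u : K)‖ = 1) (g : Sh K a) (x : Kˣ) :
    (trS a u hu g : Kˣ → ℂ) x = (g : Kˣ → ℂ) (x * u) := rfl

lemma trS_pow (a : ℝ) (u : Kˣ) (hu : ‖(u : K)‖ = 1) (g : Sh K a) (x : Kˣ) (j : ℕ) :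
    ((trS a u hu ^ j) g : Kˣ → ℂ) x = (g : Kˣ → ℂ) (x * u ^ j) := by
  induction j generalizing x with
  | zero => simp
  | succ j ih => rw [pow_succ', Module.End.mul_apply, trS_apply, ih, pow_succ', mul_assoc]

lemma trS_fin (a : ℝ) (ha : 0 < a) (u : Kˣ) (hu : ‖(u : K)‖ = 1) (g : Sh K a) :
    ∃ r : ℕ, 0 < r ∧ (trS a u hu ^ r) g = g := by
  obtain ⟨r, hr, hmem⟩ := pow_mem_nhds u hu _
    (loc_const_tube g g.2.1 _ (shell_compact (K := K) a ha))
  refine ⟨r, hr, Subtype.ext (funext fun x => ?_)⟩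
  rw [trS_pow]
  by_cases hx : ‖(x : K)‖ = a
  · exact hmem x hx
  · rw [g.2.2 x hx, g.2.2]
    rwa [norm_mul_unit]
    simp [hu]

lemma norm_lc : IsLocallyConstant fun x : Kˣ => ‖(x : K)‖ := by
  rw [IsLocallyConstant.iff_eventually_eq]
  intro x
  have hx : (0 : ℝ) < ‖(x : K)‖ := norm_pos_iff.2 x.ne_zero
  have hc : Continuous fun y : Kˣ => ‖(y : K) - x‖ := (Units.continuous_val.sub continuous_const).norm
  have h0 : ∀ᶠ y : Kˣ in nhds x, ‖(y : K) - x‖ < ‖(x : K)‖ := by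
    refine (hc.tendsto x).eventually_lt_const ?_
    simpa using hx
  filter_upwards [h0] with y hy
  have h2 := IsUltrametricDist.norm_add_eq_max_of_norm_ne_norm hy.ne
  rw [sub_add_cancel, max_eq_right hy.le] at h2
  exact h2

/-- Restriction of a locally constant function to a shell. -/
def toSh (a : ℝ) (ha : 0 < a) (g : Kˣ → ℂ) (hg : IsLocallyConstant g) : Sh K a :=
  ⟨fun x => if ‖(x : K)‖ = a then g x else 0, by
    constructor
    · exact norm_lc.comp₂ hg fun n z => if n = a then z else 0
    · intro x hx
      simp [hx]⟩

lemma toSh_apply (a : ℝ) (ha : 0 < a) (g : Kˣ → ℂ) (hg : IsLocallyConstant g) (x : Kˣ) :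
    (toSh a ha g hg : Kˣ → ℂ) x = if ‖(x : K)‖ = a then g x else 0 := rfl

end TopologyPart

section BairePart

variable {K : Type*} [NontriviallyNormedField K] [IsUltrametricDist K] [ProperSpace K]

/-- First family of closed sets. -/
def setH (f : Kˣ → ℂ) (n : ℕ) : Set ({u : Kˣ // ‖(u : K)‖ = 1} × ℝ) :=
  {p | ∀ x : Kˣ, ‖(x : K)‖ < 1 / ((n : ℝ) + 1) →
    f (x * p.1) = Complex.exp (p.2 * Complex.I) * f x}

/-- Second family of closed sets. -/
def setE (f : Kˣ → ℂ) (m n : ℕ) : Set ({u : Kˣ // ‖(u : K)‖ = 1} × ℝ) :=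
  {p | ∃ q : (Metric.closedBall (0 : Fin m → ℂ) ((n : ℝ) + 1)) ×
      (Fin m → {x : Kˣ | 1 / ((n : ℝ) + 1) ≤ ‖(x : K)‖ ∧ ‖(x : K)‖ ≤ (n : ℝ) + 1}),
    ∀ x : Kˣ, ‖(x : K)‖ < 1 / ((n : ℝ) + 1) →
      f x = ∑ i, q.1.1 i * f (x * p.1 * (q.2 i).1)
        - Complex.exp (p.2 * Complex.I) * ∑ i, q.1.1 i * f (x * (q.2 i).1)}

lemma setH_closed (f : Kˣ → ℂ) (hf : IsLocallyConstant f) (n : ℕ) : IsClosed (setH f n) := by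
  have hfc : Continuous f := hf.continuous
  simp only [setH, Set.ofPred_forall]
  refine isClosed_iInter fun x => isClosed_iInter fun _ => isClosed_eq ?_ ?_ <;> fun_prop

lemma setE_closed (f : Kˣ → ℂ) (hf : IsLocallyConstant f) (m n : ℕ) : IsClosed (setE f m n) := by
  have hfc : Continuous f := hf.continuous
  have c1 : CompactSpace (Metric.closedBall (0 : Fin m → ℂ) ((n : ℝ) + 1)) :=
    isCompact_iff_compactSpace.1 (isCompact_closedBall _ _)
  have c2 : CompactSpace {x : Kˣ | 1 / ((n : ℝ) + 1) ≤ ‖(x : K)‖ ∧ ‖(x : K)‖ ≤ (n : ℝ) + 1} :=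
    isCompact_iff_compactSpace.1 (annulus_compact _ _ (by positivity))
  have hcl : IsClosed {z : ({u : Kˣ // ‖(u : K)‖ = 1} × ℝ) ×
      ((Metric.closedBall (0 : Fin m → ℂ) ((n : ℝ) + 1)) ×
      (Fin m → {x : Kˣ | 1 / ((n : ℝ) + 1) ≤ ‖(x : K)‖ ∧ ‖(x : K)‖ ≤ (n : ℝ) + 1})) |
      ∀ x : Kˣ, ‖(x : K)‖ < 1 / ((n : ℝ) + 1) →
      f x = ∑ i, z.2.1.1 i * f (x * z.1.1 * (z.2.2 i).1)
        - Complex.exp (z.1.2 * Complex.I) * ∑ i, z.2.1.1 i * f (x * (z.2.2 i).1)} := by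
    simp only [Set.ofPred_forall]
    refine isClosed_iInter fun x => isClosed_iInter fun _ => isClosed_eq continuous_const ?_
    have e1 : ∀ i : Fin m, Continuous fun z : ({u : Kˣ // ‖(u : K)‖ = 1} × ℝ) ×
        ((Metric.closedBall (0 : Fin m → ℂ) ((n : ℝ) + 1)) ×
        (Fin m → {x : Kˣ | 1 / ((n : ℝ) + 1) ≤ ‖(x : K)‖ ∧ ‖(x : K)‖ ≤ (n : ℝ) + 1})) =>
        z.2.1.1 i := fun i =>
      (continuous_apply i).comp (continuous_subtype_val.comp (continuous_fst.comp continuous_snd))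
    have e2 : ∀ i : Fin m, Continuous fun z : ({u : Kˣ // ‖(u : K)‖ = 1} × ℝ) ×
        ((Metric.closedBall (0 : Fin m → ℂ) ((n : ℝ) + 1)) ×
        (Fin m → {x : Kˣ | 1 / ((n : ℝ) + 1) ≤ ‖(x : K)‖ ∧ ‖(x : K)‖ ≤ (n : ℝ) + 1})) =>
        (z.2.2 i).1 := fun i =>
      continuous_subtype_val.comp ((continuous_apply i).comp (continuous_snd.comp continuous_snd))
    refine Continuous.sub (continuous_finsetSum _ fun i _ => (e1 i).mul (hfc.comp ?_))
      (Continuous.mul (by fun_prop)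
        (continuous_finsetSum _ fun i _ => (e1 i).mul (hfc.comp ?_)))
    · exact Continuous.mul (continuous_const.mul
        (continuous_subtype_val.comp (continuous_fst.comp continuous_fst))) (e2 i)
    · exact continuous_const.mul (e2 i)
  have := isClosedMap_fst_of_compactSpace _ hcl
  convert this using 1
  ext p
  constructor
  · rintro ⟨q, hq⟩
    exact ⟨(p, q), hq, rfl⟩
  · rintro ⟨⟨p', q⟩, hq, rfl⟩
    exact ⟨q, hq⟩

lemma AN (f : Kˣ → ℂ) (hf : IsLocallyConstant f)
    (hnv : ¬ ∃ ε : ℝ, 0 < ε ∧ ∀ x : Kˣ, ‖(x : K)‖ < ε → f x = 0)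
    (h : ∀ u : Kˣ, ‖(u : K)‖ = 1 → ∀ θ : ℝ,
      (∃ ε : ℝ, 0 < ε ∧ ∀ x : Kˣ, ‖(x : K)‖ < ε → f (x * u) = Complex.exp (θ * Complex.I) * f x) ∨
      ∃ (m : ℕ) (c : Fin m → ℂ) (l : Fin m → Kˣ) (ε : ℝ), 0 < ε ∧ ∀ x : Kˣ, ‖(x : K)‖ < ε →
        f x = ∑ i, c i * f (x * u * l i) - Complex.exp (θ * Complex.I) * ∑ i, c i * f (x * l i))
    (u : Kˣ) (hu : ‖(u : K)‖ = 1) :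
    ∃ M : ℕ, 0 < M ∧ ∃ ε : ℝ, 0 < ε ∧ ∀ x : Kˣ, ‖(x : K)‖ < ε → f (x * u ^ M) = f x := by
  have hfc : Continuous f := hf.continuous
  have hO : CompactSpace {u : Kˣ // ‖(u : K)‖ = 1} :=
    isCompact_iff_compactSpace.1 (shell_compact (K := K) 1 one_pos)
  let F : ℕ ⊕ (ℕ × ℕ) → Set ({u : Kˣ // ‖(u : K)‖ = 1} × ℝ) :=
    Sum.elim (setH f) (fun p => setE f p.1 p.2)
  have hFc : ∀ i, IsClosed (F i) := by
    rintro (n | ⟨m, n⟩)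
    · exact setH_closed f hf n
    · exact setE_closed f hf m n
  have hFu : ⋃ i, F i = Set.univ := by
    rw [Set.eq_univ_iff_forall]
    rintro ⟨⟨u, hu⟩, θ⟩
    rw [Set.mem_iUnion]
    rcases h u hu θ with ⟨ε, hε, h1⟩ | ⟨m, c, l, ε, hε, h1⟩
    · obtain ⟨n, hn⟩ := exists_nat_one_div_lt hε
      exact ⟨Sum.inl n, fun x hx => h1 x (hx.trans hn)⟩
    · obtain ⟨n, hn⟩ := exists_nat_one_div_lt hε
      obtain ⟨n1, hn1⟩ := exists_nat_ge ‖c‖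
      have hB : ∃ B : ℕ, ∀ i, ‖((l i : Kˣ) : K)‖ ≤ B ∧ 1 / ((B : ℝ) + 1) ≤ ‖((l i : Kˣ) : K)‖ := by
        have hb : ∀ i, ∃ B : ℕ, ‖((l i : Kˣ) : K)‖ ≤ B ∧ 1 / ((B : ℝ) + 1) ≤ ‖((l i : Kˣ) : K)‖ := by
          intro i
          obtain ⟨B1, hB1⟩ := exists_nat_ge ‖((l i : Kˣ) : K)‖
          obtain ⟨B2, hB2⟩ := exists_nat_one_div_lt (norm_pos_iff.2 (l i).ne_zero)
          refine ⟨max B1 B2, hB1.trans (by exact_mod_cast le_max_left _ _), le_trans ?_ hB2.le⟩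
          gcongr
          exact le_max_right _ _
        choose B hB using hb
        refine ⟨Finset.univ.sup B, fun i => ?_⟩
        have hle : B i ≤ Finset.univ.sup B := Finset.le_sup (Finset.mem_univ i)
        refine ⟨(hB i).1.trans (by exact_mod_cast hle), le_trans ?_ (hB i).2⟩
        gcongr
      obtain ⟨B, hB⟩ := hB
      let N := max n (max n1 B)
      have hN1 : n ≤ N := le_max_left _ _
      have hN2 : n1 ≤ N := (le_max_left _ _).trans (le_max_right _ _)
      have hN3 : B ≤ N := (le_max_right _ _).trans (le_max_right _ _)
      refine ⟨Sum.inr (m, N), ⟨⟨c, ?_⟩, fun i => ⟨l i, ?_, ?_⟩⟩, fun x hx => h1 x ?_⟩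
      · rw [mem_closedBall_zero_iff]
        have : (n1 : ℝ) ≤ N := by exact_mod_cast hN2
        linarith
      · refine le_trans ?_ (hB i).2
        gcongr
      · have : (B : ℝ) ≤ N := by exact_mod_cast hN3
        linarith [(hB i).1]
      · refine hx.trans (lt_of_le_of_lt ?_ hn)
        gcongr
  have hne : Nonempty ({u : Kˣ // ‖(u : K)‖ = 1} × ℝ) := ⟨(⟨1, by simp⟩, 0)⟩
  obtain ⟨i, ⟨⟨u₀, hu₀⟩, θ₀⟩, hinn⟩ := nonempty_interior_of_iUnion_of_closed hFc hFu
  have hnb := mem_interior_iff_mem_nhds.1 hinn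
  rw [nhds_prod_eq, Filter.mem_prod_iff] at hnb
  obtain ⟨A, hA, I, hI, hAI⟩ := hnb
  obtain ⟨δ, hδ, hball⟩ := Metric.mem_nhds_iff.1 hI
  rcases i with n | ⟨m, n⟩
  · exfalso
    apply hnv
    refine ⟨1 / ((n : ℝ) + 1), by positivity, fun x hx => ?_⟩
    have k1 : ((⟨u₀, hu₀⟩ : {u : Kˣ // ‖(u : K)‖ = 1}), θ₀) ∈ setH f n :=
      hAI (Set.mk_mem_prod (mem_of_mem_nhds hA) (mem_of_mem_nhds hI))
    set η := min (δ / 2) 1 with hη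
    have hη0 : 0 < η := lt_min (by linarith) one_pos
    have k2 : ((⟨u₀, hu₀⟩ : {u : Kˣ // ‖(u : K)‖ = 1}), θ₀ + η) ∈ setH f n := by
      refine hAI (Set.mk_mem_prod (mem_of_mem_nhds hA) (hball ?_))
      rw [Metric.mem_ball, Real.dist_eq, add_sub_cancel_left, abs_of_pos hη0]
      linarith [min_le_left (δ / 2) 1]
    have e1 := k1 x hx
    have e2 := k2 x hx
    simp only at e1 e2
    rw [e1] at e2
    by_contra hfx
    have e3 := mul_right_cancel₀ hfx e2
    push_cast at e3
    rw [add_mul, Complex.exp_add] at e3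
    have e4 : Complex.exp (η * Complex.I) = 1 := by
      have h0 := Complex.exp_ne_zero (θ₀ * Complex.I)
      field_simp at e3
      rw [mul_comm]
      exact e3.symm
    rw [Complex.exp_eq_one_iff] at e4
    obtain ⟨k, hk⟩ := e4
    have hk' : (η : ℝ) = k * (2 * Real.pi) := by
      have := congrArg Complex.im hk
      simpa using this
    have hpi := Real.pi_gt_three
    have hη1 : η ≤ 1 := min_le_right _ _
    have hk0 : (0 : ℝ) < k := by
      by_contra hle
      push Not at hle
      nlinarith
    have hk1 : (1 : ℝ) ≤ k := by
      have : (0 : ℤ) < k := by exact_mod_cast hk0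
      exact_mod_cast this
    nlinarith
  · -- main case
    have hN : {v : Kˣ | ∀ hv : ‖(v : K)‖ = 1, (⟨u₀ * v, by rw [norm_mul_unit v hv, hu₀]⟩ :
        {u : Kˣ // ‖(u : K)‖ = 1}) ∈ A} ∈ nhds (1 : Kˣ) := by
      rw [nhds_induced, Filter.mem_comap] at hA
      obtain ⟨t, ht, htA⟩ := hA
      have hc : Filter.Tendsto (fun v : Kˣ => u₀ * v) (nhds 1) (nhds u₀) := by
        have := (continuous_const_mul u₀).tendsto (1 : Kˣ)
        rwa [mul_one] at this
      filter_upwards [hc ht] with v hv hv1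
      exact htA hv
    obtain ⟨ε, hε, hε1, hεN⟩ := ball_nhds _ hN
    obtain ⟨D, hD⟩ := exists_nat_ge (2 * Real.pi / δ)
    obtain ⟨r, hr, hrm⟩ := pow_mem_nhds u hu {v : Kˣ | ‖(v : K) - 1‖ < ε} (by
      have hc : Continuous fun y : Kˣ => ‖(y : K) - 1‖ :=
        (Units.continuous_val.sub continuous_const).norm
      refine (hc.tendsto 1).eventually_lt_const ?_
      simpa using hε)
    set v := u ^ r with hv
    have hvb : ‖(v : K) - 1‖ < ε := hrm
    have hv1 : ‖(v : K)‖ = 1 := ball_norm hε1 v hvb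
    refine ⟨r * D.factorial, Nat.mul_pos hr (Nat.factorial_pos D), 1 / ((n : ℝ) + 1),
      by positivity, fun x hx => ?_⟩
    rw [pow_mul, ← hv]
    set a := ‖(x : K)‖ with ha
    have ha0 : 0 < a := norm_pos_iff.2 x.ne_zero
    have key := arc_main (trS a v hv1) (trS a u₀ hu₀) (fun g => by
        apply Subtype.ext; funext y
        rw [trS_apply, trS_apply, trS_apply, trS_apply, mul_right_comm])
      (trS_fin a ha0 v hv1) (trS_fin a ha0 u₀ hu₀) θ₀ δ hδ D hD (toSh a ha0 f hf) (by
        intro j θ hθ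
        have hvj := ball_pow hε hε1 v hvb j
        have hvj1 := ball_norm hε1 _ hvj
        have hE : ((⟨u₀ * v ^ j, by rw [norm_mul_unit _ hvj1, hu₀]⟩ :
            {u : Kˣ // ‖(u : K)‖ = 1}), θ) ∈ setE f m n :=
          hAI (Set.mk_mem_prod (hεN _ hvj hvj1) (hball hθ))
        obtain ⟨⟨⟨c, hc⟩, l⟩, hq⟩ := hE
        let G : Kˣ → ℂ := fun y => ∑ i, c i * f (y * (l i).1)
        have hG : IsLocallyConstant G := by
          have : ∀ s : Finset (Fin m), IsLocallyConstant fun y : Kˣ =>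
              ∑ i ∈ s, c i * f (y * (l i).1) := by
            intro s
            induction s using Finset.induction_on with
            | empty => exact IsLocallyConstant.const (0 : ℂ)
            | insert i s hi ih =>
              simp only [Finset.sum_insert hi]
              exact ((hf.comp_continuous (continuous_mul_const (l i).1)).comp
                (fun z => c i * z)).comp₂ ih (· + ·)
          exact this Finset.univ
        refine ⟨toSh a ha0 G hG, Subtype.ext (funext fun y => ?_)⟩
        rw [Submodule.coe_sub, Submodule.coe_smul, Pi.sub_apply, Pi.smul_apply, trS_apply, trS_pow,
          toSh_apply, toSh_apply, toSh_apply, mul_assoc, norm_mul_unit (u₀ * v ^ j) (by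
            rw [norm_mul_unit _ hvj1, hu₀])]
        by_cases hy : ‖(y : K)‖ = a
        · simp only [hy, if_true]
          exact hq y (by rw [hy]; exact hx)
        · simp [hy])
    have k2 := congrFun (congrArg Subtype.val key) x
    rw [trS_pow, toSh_apply, toSh_apply, norm_mul_unit (v ^ D.factorial) (by simp [hv1])] at k2
    simpa [← ha] using k2

end BairePart

set_option linter.unusedSectionVars false
section CoinvPart

open Aff

variable {K : Type*} [NontriviallyNormedField K] [IsUltrametricDist K] [ProperSpace K]

/-- Vanishing near `0`. -/
def Near0 (g : Kˣ → ℂ) : Prop := ∃ ε : ℝ, 0 < ε ∧ ∀ x : Kˣ, ‖(x : K)‖ < ε → g x = 0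

lemma Near0.add {g h : Kˣ → ℂ} (hg : Near0 g) (hh : Near0 h) : Near0 (g + h) := by
  obtain ⟨a, ha, h1⟩ := hg
  obtain ⟨b, hb, h2⟩ := hh
  refine ⟨min a b, lt_min ha hb, fun x hx => ?_⟩
  rw [Pi.add_apply, h1 x (hx.trans_le (min_le_left _ _)), h2 x (hx.trans_le (min_le_right _ _)),
    add_zero]

lemma Near0.smul {g : Kˣ → ℂ} (c : ℂ) (hg : Near0 g) : Near0 (c • g) := by
  obtain ⟨a, ha, h1⟩ := hg
  exact ⟨a, ha, fun x hx => by rw [Pi.smul_apply, h1 x hx, smul_zero]⟩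

lemma psi_near (ψ : AddChar K ℂ) (hψlc : IsLocallyConstant (⇑ψ)) :
    ∃ η : ℝ, 0 < η ∧ ∀ y : K, ‖y‖ < η → ψ y = 1 := by
  have h := (IsLocallyConstant.iff_eventually_eq _).1 hψlc 0
  obtain ⟨η, hη, hb⟩ := Metric.eventually_nhds_iff.1 h
  refine ⟨η, hη, fun y hy => ?_⟩
  rw [hb (by simpa using hy), AddChar.map_zero_eq_one]

lemma small_nat (η : ℝ) (hη : 0 < η) : ∃ m : ℕ, 0 < m ∧ ‖(m : K)‖ < η := by
  have hx : ∀ n : ℕ, (n : K) ∈ Metric.closedBall (0 : K) 1 := by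
    intro n
    simpa using IsUltrametricDist.norm_natCast_le_one K n
  obtain ⟨a, _, φ, hφ, hlim⟩ := (isCompact_closedBall (0 : K) 1).tendsto_subseq hx
  obtain ⟨n, hn⟩ := Metric.cauchySeq_iff.1 hlim.cauchySeq η hη
  have h := hn (n + 1) (by omega) n le_rfl
  have hlt : φ n < φ (n + 1) := hφ (by omega)
  refine ⟨φ (n + 1) - φ n, by omega, ?_⟩
  rw [dist_eq_norm] at h
  rw [Nat.cast_sub hlt.le]
  exact h

lemma Cb_bdd (f : Kˣ → ℂ) (hf : f ∈ Cb K) : ∃ R : ℝ, ∀ x : Kˣ, f x ≠ 0 → ‖(x : K)‖ ≤ R := by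
  obtain ⟨R, hR⟩ := hf.2.isBounded.exists_norm_le
  exact ⟨R, fun x hx => hR _ (subset_closure ⟨x, hx, rfl⟩)⟩

variable (ψ : AddChar K ℂ) (M : Submodule ℂ (Kˣ → ℂ)) (hMi : GRep.Invariant (repCx K ψ) M)

lemma sub_xT (u : Kˣ) (v : M) (x : Kˣ) :
    ((GRep.sub (repCx K ψ) hMi (xT u) v : M) : Kˣ → ℂ) x = (v : Kˣ → ℂ) (x * u) := by
  rw [GRep.sub_apply, repCx_apply]
  simp

lemma sub_sS (b : K) (v : M) (x : Kˣ) :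
    ((GRep.sub (repCx K ψ) hMi (sS b) v : M) : Kˣ → ℂ) x = ψ (b * x) * (v : Kˣ → ℂ) x := by
  rw [GRep.sub_apply, repCx_apply]
  simp

lemma coinv_near (ψ : AddChar K ℂ) (hψlc : IsLocallyConstant (⇑ψ))
    (M : Submodule ℂ (Kˣ → ℂ)) (hMi : GRep.Invariant (repCx K ψ) M)
    (v : M) (hv : v ∈ sCoinvKer (GRep.sub (repCx K ψ) hMi)) :
    Near0 (v : Kˣ → ℂ) := by
  obtain ⟨η, hη, hψ⟩ := psi_near ψ hψlc
  unfold sCoinvKer at hv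
  induction hv using Submodule.span_induction with
  | mem w hw =>
    obtain ⟨b, v, rfl⟩ := hw
    refine ⟨η / (‖b‖ + 1), by positivity, fun x hx => ?_⟩
    rw [Submodule.coe_sub, Pi.sub_apply, sub_sS, hψ, one_mul, sub_self]
    rw [norm_mul]
    rw [lt_div_iff₀ (by positivity)] at hx
    nlinarith [norm_nonneg b, norm_pos_iff.2 x.ne_zero]
  | zero => exact ⟨1, one_pos, fun x _ => rfl⟩
  | add a b _ _ ha hb => exact ha.add hb
  | smul c a _ ha => exact ha.smul c

lemma near_coinv (ψ : AddChar K ℂ) (hψlc : IsLocallyConstant (⇑ψ)) (hψne : ψ ≠ 1)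
    (M : Submodule ℂ (Kˣ → ℂ)) (hMi : GRep.Invariant (repCx K ψ) M) (hMle : M ≤ Cb K)
    (v : M) (hv : Near0 (v : Kˣ → ℂ)) :
    v ∈ sCoinvKer (GRep.sub (repCx K ψ) hMi) := by
  obtain ⟨ε, hε, hv⟩ := hv
  obtain ⟨R, hR⟩ := Cb_bdd _ (hMle v.2)
  obtain ⟨η, hη, hψ⟩ := psi_near ψ hψlc
  set A : Set Kˣ := {x : Kˣ | ε ≤ ‖(x : K)‖ ∧ ‖(x : K)‖ ≤ R} with hA
  have hAc : IsCompact A := annulus_compact ε R hε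
  have hsupp : ∀ x, (v : Kˣ → ℂ) x ≠ 0 → x ∈ A := by
    intro x hx
    refine ⟨?_, hR x hx⟩
    by_contra hlt
    push Not at hlt
    exact hx (hv x hlt)
  have hcl : ∀ (b : K) (w : M), ((GRep.sub (repCx K ψ) hMi) (sS b) w - w) ∈
      sCoinvKer (GRep.sub (repCx K ψ) hMi) := fun b w => Submodule.subset_span ⟨b, w, rfl⟩
  have step : ∀ B : Finset K, ∃ w : M, v - w ∈ sCoinvKer (GRep.sub (repCx K ψ) hMi) ∧
      ∀ x, (w : Kˣ → ℂ) x ≠ 0 → (v : Kˣ → ℂ) x ≠ 0 ∧ ∀ b ∈ B, ψ (b * x) = 1 := by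
    intro B
    induction B using Finset.induction_on with
    | empty => exact ⟨v, by rw [sub_self]; exact Submodule.zero_mem _, fun x hx => ⟨hx, by simp⟩⟩
    | insert b B hb ih =>
      obtain ⟨w, hw1, hw2⟩ := ih
      obtain ⟨m, hm, hmn⟩ := small_nat (K := K) (η / ((‖b‖ + 1) * (|R| + 1))) (by positivity)
      have hψm : ∀ x ∈ A, ψ (b * x) ^ m = 1 := by
        intro x hx
        rw [← AddChar.map_nsmul_eq_pow, hψ]
        rw [nsmul_eq_mul, norm_mul, norm_mul]
        rw [lt_div_iff₀ (by positivity)] at hmn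
        refine lt_of_le_of_lt ?_ hmn
        have := hx.2.trans (le_abs_self R)
        gcongr <;> linarith
      let w' : M := (m : ℂ)⁻¹ • ∑ j ∈ Finset.range m,
        (GRep.sub (repCx K ψ) hMi) (sS ((j : K) * b)) w
      have hm0 : (m : ℂ) ≠ 0 := by exact_mod_cast hm.ne'
      have hw' : ∀ x, (w' : Kˣ → ℂ) x = (m : ℂ)⁻¹ * ((∑ j ∈ Finset.range m, ψ (b * x) ^ j)
          * (w : Kˣ → ℂ) x) := by
        intro x
        simp only [w', Submodule.coe_smul, Pi.smul_apply, smul_eq_mul, Submodule.coe_sum,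
          Finset.sum_apply, sub_sS, Finset.sum_mul]
        congr 1
        refine Finset.sum_congr rfl fun j _ => ?_
        rw [← AddChar.map_nsmul_eq_pow, nsmul_eq_mul, mul_assoc]
      have hww : w - w' ∈ sCoinvKer (GRep.sub (repCx K ψ) hMi) := by
        have : w' - w = (m : ℂ)⁻¹ • ∑ j ∈ Finset.range m,
            ((GRep.sub (repCx K ψ) hMi) (sS ((j : K) * b)) w - w) := by
          rw [Finset.sum_sub_distrib, smul_sub, Finset.sum_const, Finset.card_range,
            ← Nat.cast_smul_eq_nsmul ℂ, smul_smul, inv_mul_cancel₀ hm0, one_smul]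
        rw [← neg_mem_iff, neg_sub, this]
        exact Submodule.smul_mem _ _ (Submodule.sum_mem _ fun j _ => hcl _ _)
      refine ⟨w', ?_, fun x hx => ?_⟩
      · have := Submodule.add_mem _ hw1 hww
        rwa [sub_add_sub_cancel] at this
      · have hwx : (w : Kˣ → ℂ) x ≠ 0 := by
          intro h0
          apply hx
          rw [hw', h0, mul_zero, mul_zero]
        refine ⟨(hw2 x hwx).1, fun b' hb' => ?_⟩
        rcases Finset.mem_insert.1 hb' with rfl | hb'
        · by_contra hne
          apply hx
          have hg := geom_sum_eq hne m
          rw [hψm x (hsupp x (hw2 x hwx).1), sub_self, zero_div] at hg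
          rw [hw', hg, zero_mul, mul_zero]
        · exact (hw2 x hwx).2 b' hb'
  obtain ⟨y, hy⟩ : ∃ y, ψ y ≠ 1 := by
    by_contra hcon
    push Not at hcon
    exact hψne (DFunLike.ext _ _ fun y => by simpa using hcon y)
  obtain ⟨B, hB⟩ := hAc.elim_finite_subcover (fun b : K => {x : Kˣ | ψ (b * x) ≠ 1})
    (fun b => (hψlc.comp_continuous (f := fun x : Kˣ => b * (x : K))
        (continuous_const.mul Units.continuous_val)) {1}ᶜ)
    (fun x _ => by
      rw [Set.mem_iUnion]
      refine ⟨y * ((x⁻¹ : Kˣ) : K), ?_⟩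
      show ψ (y * ((x⁻¹ : Kˣ) : K) * x) ≠ 1
      rwa [Units.inv_mul_cancel_right])
  obtain ⟨w, hw1, hw2⟩ := step B
  have hw0 : w = 0 := by
    apply Subtype.ext
    funext x
    by_contra hx
    obtain ⟨h1, h2⟩ := hw2 x hx
    have := hB (hsupp x h1)
    simp only [Set.mem_iUnion] at this
    obtain ⟨b, hb, hne⟩ := this
    exact hne (h2 b hb)
  rwa [hw0, sub_zero] at hw1

lemma coinv_iff (ψ : AddChar K ℂ) (hψlc : IsLocallyConstant (⇑ψ)) (hψne : ψ ≠ 1)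
    (M : Submodule ℂ (Kˣ → ℂ)) (hMi : GRep.Invariant (repCx K ψ) M) (hMle : M ≤ Cb K)
    (v : M) : v ∈ sCoinvKer (GRep.sub (repCx K ψ) hMi) ↔ Near0 (v : Kˣ → ℂ) :=
  ⟨coinv_near ψ hψlc M hMi v, near_coinv ψ hψlc hψne M hMi hMle v⟩

lemma piZeroT_mk (u : Kˣ) (v : M) :
    piZeroT (GRep.sub (repCx K ψ) hMi) u (Submodule.Quotient.mk v) =
      Submodule.Quotient.mk (GRep.sub (repCx K ψ) hMi (xT u) v) := rfl

lemma comap_inv {V : Type*} [AddCommGroup V] [Module ℂ V] (ρ : Rep K V)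
    (U : Submodule ℂ (V ⧸ sCoinvKer ρ)) (hU : GRep.Invariant (piZeroT ρ) U) :
    GRep.Invariant ρ (U.comap (sCoinvKer ρ).mkQ) := by
  intro g v hv
  rw [Submodule.mem_comap] at hv ⊢
  have h1 : (sCoinvKer ρ).mkQ (ρ g v) = piZeroT ρ g.t ((sCoinvKer ρ).mkQ v) := by
    show Submodule.Quotient.mk (ρ g v) = Submodule.Quotient.mk (ρ (xT g.t) v)
    rw [Submodule.Quotient.eq]
    have e : ρ g v = ρ (xT g.t) (ρ (sS (((g.t⁻¹ : Kˣ) : K) * g.s)) v) := by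
      conv_lhs => rw [aff_decomp g]
      rw [map_mul, Module.End.mul_apply]
    rw [e, ← map_sub]
    exact sCoinvKer_invariant ρ _ _ (Submodule.subset_span ⟨_, v, rfl⟩)
  rw [h1]
  exact hU _ _ hv

lemma fd_X (ψ : AddChar K ℂ) (hψlc : IsLocallyConstant (⇑ψ)) (hψne : ψ ≠ 1)
    (M : Submodule ℂ (Kˣ → ℂ)) (hMi : GRep.Invariant (repCx K ψ) M) (hMle : M ≤ Cb K)
    (ϖ : Kˣ) (hϖgen : ∀ x : Kˣ, ∃ n : ℤ, ‖(x : K)‖ = ‖(ϖ : K)‖ ^ n)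
    (c : CompSeries (GRep.sub (repCx K ψ) hMi)) :
    FiniteDimensional ℂ (M ⧸ sCoinvKer (GRep.sub (repCx K ψ) hMi)) := by
  set ρ := GRep.sub (repCx K ψ) hMi with hρ
  have hsurj : Function.Surjective (sCoinvKer ρ).mkQ := Submodule.mkQ_surjective _
  refine fd_main (piZeroT ρ) (fun U => csRank c (U.comap (sCoinvKer ρ).mkQ)) c.n ?_
    (fun U => csRank_le c _) {u : Kˣ | ‖(u : K)‖ = 1} ϖ ?_ ?_
  · intro U V hU _ hUV
    refine csRank_lt c _ _ (comap_inv ρ U hU) ?_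
    refine lt_of_le_of_ne (Submodule.comap_mono hUV.le) fun h => hUV.ne ?_
    exact Submodule.comap_injective_of_surjective hsurj h
  · intro g
    obtain ⟨n, hn⟩ := hϖgen g
    refine ⟨n, (ϖ ^ n)⁻¹ * g, ?_, by simp⟩
    show ‖(((ϖ ^ n)⁻¹ * g : Kˣ) : K)‖ = 1
    have h0 : ‖(ϖ : K)‖ ≠ 0 := norm_ne_zero_iff.2 ϖ.ne_zero
    rw [Units.val_mul, norm_mul, hn, Units.val_inv_eq_inv_val, norm_inv, Units.val_zpow_eq_zpow_val,
      norm_zpow, inv_mul_cancel₀ (zpow_ne_zero n h0)]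
  · intro x hx h u hu
    obtain ⟨v, rfl⟩ := hsurj x
    have hvn : ¬ Near0 (v : Kˣ → ℂ) := by
      intro h1
      apply hx
      rw [Submodule.mkQ_apply, Submodule.Quotient.mk_eq_zero]
      exact near_coinv ψ hψlc hψne M hMi hMle v h1
    obtain ⟨N, hN, ε, hε, hNv⟩ := AN (v : Kˣ → ℂ) (hMle v.2).1 hvn (by
      intro u hu θ
      rcases h u hu θ with h1 | ⟨g, hg, h1⟩
      · left
        have h2 : ρ (xT u) v - Complex.exp (θ * Complex.I) • v ∈ sCoinvKer ρ := by
          rw [← Submodule.Quotient.eq]; exact h1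
        obtain ⟨ε, hε, h3⟩ := coinv_near ψ hψlc M hMi _ h2
        refine ⟨ε, hε, fun x hx => ?_⟩
        have h4 := h3 x hx
        rw [Submodule.coe_sub, Pi.sub_apply, sub_xT, Submodule.coe_smul, Pi.smul_apply,
          sub_eq_zero] at h4
        exact h4
      · right
        obtain ⟨m, a, l, hl⟩ := (Submodule.mem_span_set').1 hg
        choose l' hl' using fun i => (l i).2
        let G : M := ∑ i, a i • ρ (xT (l' i)) v
        have hG : (sCoinvKer ρ).mkQ G = g := by
          rw [← hl, map_sum]
          refine Finset.sum_congr rfl fun i _ => ?_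
          rw [map_smul, ← hl' i]
          rfl
        have hGx : ∀ x, (G : Kˣ → ℂ) x = ∑ i, a i * (v : Kˣ → ℂ) (x * l' i) := by
          intro x
          simp only [G, Submodule.coe_sum, Finset.sum_apply, Submodule.coe_smul, Pi.smul_apply,
            smul_eq_mul, hρ, sub_xT]
        rw [← hG] at h1
        have h2 : v - (ρ (xT u) G - Complex.exp (θ * Complex.I) • G) ∈ sCoinvKer ρ := by
          rw [← Submodule.Quotient.eq]; exact h1
        obtain ⟨ε, hε, h3⟩ := coinv_near ψ hψlc M hMi _ h2
        refine ⟨m, a, l', ε, hε, fun x hx => ?_⟩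
        have h4 := h3 x hx
        rw [Submodule.coe_sub, Pi.sub_apply, Submodule.coe_sub, Pi.sub_apply, sub_xT,
          Submodule.coe_smul, Pi.smul_apply, sub_eq_zero, hGx, hGx] at h4
        exact h4) u hu
    refine ⟨N, hN, ?_⟩
    show Submodule.Quotient.mk (ρ (xT (u ^ N)) v) = Submodule.Quotient.mk v
    rw [Submodule.Quotient.eq]
    refine near_coinv ψ hψlc hψne M hMi hMle _ ⟨ε, hε, fun x hx => ?_⟩
    rw [Submodule.coe_sub, Pi.sub_apply, sub_xT, hNv x hx, sub_self]

end CoinvPart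

set_option linter.unusedSectionVars false
section ZetaPart

open Aff MeasureTheory

/-- A power series whose coefficients satisfy a linear recurrence is rational. -/
lemma rec_series (e m0 : ℕ) (p : ℕ → ℂ) (b : ℕ → ℂ)
    (hrec : ∀ m, m0 ≤ m → ∑ j ∈ Finset.range (e + 1), p j * b (m + j) = 0)
    (t Z : ℂ) (hZ : HasSum (fun m => b m * t ^ m) Z) :
    (∑ j ∈ Finset.range (e + 1), p j * t ^ (e - j)) * Z =
      ∑ j ∈ Finset.range (e + 1), p j * t ^ (e - j) *
        ∑ i ∈ Finset.range (m0 + j), b i * t ^ i := by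
  have h1 : ∀ j ∈ Finset.range (e + 1), HasSum
      (fun m => p j * t ^ (e - j) * (b (m + (m0 + j)) * t ^ (m + (m0 + j))))
      (p j * t ^ (e - j) * (Z - ∑ i ∈ Finset.range (m0 + j), b i * t ^ i)) := by
    intro j _
    refine HasSum.mul_left _ ?_
    refine (hasSum_nat_add_iff (f := fun m => b m * t ^ m) (m0 + j)).2 ?_
    rwa [sub_add_cancel]
  have h2 := hasSum_sum h1
  have h3 : (fun m => ∑ j ∈ Finset.range (e + 1),
      p j * t ^ (e - j) * (b (m + (m0 + j)) * t ^ (m + (m0 + j)))) = fun _ => 0 := by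
    funext m
    have : ∀ j ∈ Finset.range (e + 1),
        p j * t ^ (e - j) * (b (m + (m0 + j)) * t ^ (m + (m0 + j))) =
          t ^ (m + m0 + e) * (p j * b (m + m0 + j)) := by
      intro j hj
      have hj' : j ≤ e := Nat.lt_succ_iff.1 (Finset.mem_range.1 hj)
      have : m + m0 + e = (e - j) + (m + (m0 + j)) := by omega
      rw [this, pow_add, ← add_assoc m m0 j]
      ring
    rw [Finset.sum_congr rfl this, ← Finset.mul_sum, hrec _ (by omega), mul_zero]
  rw [h3] at h2
  have h4 := h2.unique hasSum_zero
  simp only [mul_sub] at h4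
  rw [Finset.sum_sub_distrib, sub_eq_zero, ← Finset.sum_mul] at h4
  exact h4

lemma det_rev {Y : Type*} [AddCommGroup Y] [Module ℂ Y] [FiniteDimensional ℂ Y]
    (T : Y →ₗ[ℂ] Y) (t : ℂ) (ht : t ≠ 0) :
    LinearMap.det (LinearMap.id - t • T) =
      ∑ j ∈ Finset.range (T.charpoly.natDegree + 1),
        T.charpoly.coeff j * t ^ (T.charpoly.natDegree - j) := by
  have h1 : LinearMap.id - t • T = t • (algebraMap ℂ (Y →ₗ[ℂ] Y) t⁻¹ - T) := by
    rw [smul_sub, Algebra.algebraMap_eq_smul_one, smul_smul, mul_inv_cancel₀ ht, one_smul]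
    rfl
  rw [h1, LinearMap.det_smul, ← LinearMap.eval_charpoly, Polynomial.eval_eq_sum_range,
    LinearMap.charpoly_natDegree, Finset.mul_sum]
  refine Finset.sum_congr rfl fun j hj => ?_
  have hj' : j ≤ Module.finrank ℂ Y := Nat.lt_succ_iff.1 (Finset.mem_range.1 hj)
  obtain ⟨k, hk⟩ := Nat.exists_eq_add_of_le hj'
  rw [hk, Nat.add_sub_cancel_left, pow_add, inv_pow]
  field_simp

lemma det_small {Y : Type*} [AddCommGroup Y] [Module ℂ Y] [FiniteDimensional ℂ Y]
    (T : Y →ₗ[ℂ] Y) : ∃ δ : ℝ, 0 < δ ∧ ∀ t : ℂ, ‖t‖ < δ →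
      ∑ j ∈ Finset.range (T.charpoly.natDegree + 1),
        T.charpoly.coeff j * t ^ (T.charpoly.natDegree - j) ≠ 0 := by
  have hc : Continuous fun t : ℂ => ∑ j ∈ Finset.range (T.charpoly.natDegree + 1),
        T.charpoly.coeff j * t ^ (T.charpoly.natDegree - j) := by fun_prop
  have h0 : ∑ j ∈ Finset.range (T.charpoly.natDegree + 1),
        T.charpoly.coeff j * (0 : ℂ) ^ (T.charpoly.natDegree - j) = 1 := by
    rw [Finset.sum_range_succ, Finset.sum_eq_zero]
    · simp [(LinearMap.charpoly_monic T).leadingCoeff]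
    · intro j hj
      have := Finset.mem_range.1 hj
      rw [zero_pow (by omega), mul_zero]
  have := (hc.tendsto 0).eventually_ne (b₂ := (0 : ℂ)) (by rw [h0]; exact one_ne_zero)
  obtain ⟨δ, hδ, hb⟩ := Metric.eventually_nhds_iff.1 this
  exact ⟨δ, hδ, fun t ht => hb (by simpa using ht)⟩

variable {K : Type*} [NontriviallyNormedField K] [IsUltrametricDist K] [ProperSpace K]

/-- The function `f χ`. -/
def phi (χ : Kˣ →* ℂˣ) (f : Kˣ → ℂ) : Kˣ → ℂ := fun x => f x * (χ x : ℂ)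

/-- The shell of norm `‖ϖ‖ ^ n`. -/
def Sl (ϖ : Kˣ) (n : ℤ) : Set Kˣ := {x : Kˣ | ‖(x : K)‖ = ‖(ϖ : K)‖ ^ n}

lemma pi_pos (ϖ : Kˣ) : 0 < ‖(ϖ : K)‖ := norm_pos_iff.2 ϖ.ne_zero

lemma chi_lc (χ : Kˣ →* ℂˣ) (hχ : SmoothMulChar χ) : IsLocallyConstant fun x : Kˣ => (χ x : ℂ) := by
  rw [IsLocallyConstant.iff_exists_open]
  intro x
  refine ⟨(fun y => x⁻¹ * y) ⁻¹' {u : Kˣ | χ u = 1}, ?_, ?_, ?_⟩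
  · exact IsOpen.preimage (continuous_const_mul _) hχ
  · simp
  · intro y hy
    have h : χ (x⁻¹ * y) = 1 := hy
    rw [map_mul, map_inv, inv_mul_eq_one] at h
    rw [h]

lemma phi_lc (χ : Kˣ →* ℂˣ) (hχ : SmoothMulChar χ) (f : Kˣ → ℂ) (hf : IsLocallyConstant f) :
    IsLocallyConstant (phi χ f) := hf.comp₂ (chi_lc χ hχ) (· * ·)

lemma Sl_compact (ϖ : Kˣ) (n : ℤ) : IsCompact (Sl ϖ n) :=
  shell_compact _ (zpow_pos (pi_pos ϖ) n)

lemma Sl_mul (ϖ : Kˣ) (n k : ℤ) (u : Kˣ) (hu : ‖(u : K)‖ = ‖(ϖ : K)‖ ^ k) (x : Kˣ) :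
    x * u ∈ Sl ϖ (n + k) ↔ x ∈ Sl ϖ n := by
  show ‖((x * u : Kˣ) : K)‖ = ‖(ϖ : K)‖ ^ (n + k) ↔ ‖(x : K)‖ = ‖(ϖ : K)‖ ^ n
  rw [Units.val_mul, norm_mul, hu, zpow_add₀ (pi_pos ϖ).ne']
  exact mul_left_inj' (zpow_pos (pi_pos ϖ) k).ne'

variable [MeasurableSpace Kˣ] [BorelSpace Kˣ]

lemma Sl_meas (ϖ : Kˣ) (n : ℤ) : MeasurableSet (Sl ϖ n) := (Sl_compact ϖ n).measurableSet

lemma Sl_shift (μhaar : Measure Kˣ) [μhaar.IsHaarMeasure] (ϖ : Kˣ) (n k : ℤ) (u : Kˣ)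
    (hu : ‖(u : K)‖ = ‖(ϖ : K)‖ ^ k) (g : Kˣ → ℂ) :
    ∫ x in Sl ϖ n, g (x * u) ∂μhaar = ∫ x in Sl ϖ (n + k), g x ∂μhaar := by
  rw [← integral_indicator (Sl_meas ϖ n), ← integral_indicator (Sl_meas ϖ (n + k)),
    ← integral_mul_right_eq_self ((Sl ϖ (n + k)).indicator g) u]
  congr 1
  funext x
  by_cases hx : x ∈ Sl ϖ n
  · rw [Set.indicator_of_mem hx, Set.indicator_of_mem ((Sl_mul ϖ n k u hu x).2 hx)]
  · rw [Set.indicator_of_notMem hx,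
      Set.indicator_of_notMem (fun h => hx ((Sl_mul ϖ n k u hu x).1 h))]

lemma Sl_vol (μhaar : Measure Kˣ) [μhaar.IsHaarMeasure]
    (hnorm : μhaar {u : Kˣ | ‖(u : K)‖ = 1} = 1) (ϖ : Kˣ) (n : ℤ) : μhaar (Sl ϖ n) = 1 := by
  rw [← hnorm, ← measure_preimage_mul_right μhaar (ϖ ^ n) (Sl ϖ n)]
  congr 1
  ext x
  have := Sl_mul ϖ 0 n (ϖ ^ n) (by simp) x
  rw [zero_add] at this
  rw [Set.mem_preimage, this]
  show ‖(x : K)‖ = ‖(ϖ : K)‖ ^ (0 : ℤ) ↔ ‖(x : K)‖ = 1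
  rw [zpow_zero]

lemma Sl_int (μhaar : Measure Kˣ) [μhaar.IsHaarMeasure] (ϖ : Kˣ) (n : ℤ) (g : Kˣ → ℂ)
    (hg : IsLocallyConstant g) : IntegrableOn g (Sl ϖ n) μhaar :=
  hg.continuous.continuousOn.integrableOn_compact (Sl_compact ϖ n)

lemma Sl_cpow (ϖ : Kˣ) (n : ℤ) (x : Kˣ) (hx : x ∈ Sl ϖ n) (s : ℂ) :
    (‖(x : K)‖ : ℂ) ^ s = ((‖(ϖ : K)‖ : ℂ) ^ s) ^ n := by
  have h : ‖(x : K)‖ = ‖(ϖ : K)‖ ^ n := hx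
  rw [h, Complex.ofReal_zpow, ← Complex.cpow_mul_int]
  have hp := pi_pos ϖ
  have hp1 : (‖(ϖ : K)‖ : ℂ) ≠ 0 := by exact_mod_cast hp.ne'
  rw [Complex.cpow_def_of_ne_zero hp1, Complex.cpow_def_of_ne_zero (zpow_ne_zero n hp1),
    ← Complex.ofReal_zpow, ← Complex.ofReal_log (zpow_pos hp n).le, Real.log_zpow,
    ← Complex.ofReal_log hp.le]
  push_cast
  ring_nf

/-- Convergence of the zeta integral and its expansion, given a growth bound. -/
lemma zeta_sum (μhaar : Measure Kˣ) [μhaar.IsHaarMeasure]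
    (hnorm : μhaar {u : Kˣ | ‖(u : K)‖ = 1} = 1) (ϖ : Kˣ) (hϖlt : ‖(ϖ : K)‖ < 1)
    (g : Kˣ → ℂ) (hg : IsLocallyConstant g) (n0 : ℤ)
    (hsupp : ∀ x, g x ≠ 0 → ∃ m : ℕ, x ∈ Sl ϖ (n0 + m)) (C r : ℝ)
    (hC : ∀ m : ℕ, ∀ x ∈ Sl ϖ (n0 + m), ‖g x‖ ≤ C * r ^ m) (hC0 : 0 ≤ C) (hr0 : 0 ≤ r)
    (s : ℂ) (hs : r * ‖(‖(ϖ : K)‖ : ℂ) ^ s‖ < 1) :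
    Integrable (fun x : Kˣ => g x * (‖(x : K)‖ : ℂ) ^ s) μhaar ∧
    HasSum (fun m : ℕ => (∫ x in Sl ϖ (n0 + m), g x ∂μhaar) * ((‖(ϖ : K)‖ : ℂ) ^ s) ^ m)
      ((((‖(ϖ : K)‖ : ℂ) ^ s) ^ n0)⁻¹ * ∫ x : Kˣ, g x * (‖(x : K)‖ : ℂ) ^ s ∂μhaar) := by
  set t : ℂ := (‖(ϖ : K)‖ : ℂ) ^ s with ht
  have ht0 : t ≠ 0 := by
    rw [ht, Ne, Complex.cpow_eq_zero_iff, not_and_or]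
    left
    exact_mod_cast (pi_pos ϖ).ne'
  set Φ : Kˣ → ℂ := fun x => g x * (‖(x : K)‖ : ℂ) ^ s with hΦ
  have hΦlc : IsLocallyConstant Φ := hg.comp₂ norm_lc fun z a => z * (a : ℂ) ^ s
  have hsub : Function.support Φ ⊆ ⋃ m : ℕ, Sl ϖ (n0 + m) := by
    intro x hx
    obtain ⟨m, hm⟩ := hsupp x (left_ne_zero_of_mul hx)
    exact Set.mem_iUnion.2 ⟨m, hm⟩
  have hvol : ∀ n, μhaar.real (Sl ϖ n) = 1 := fun n => by
    rw [Measure.real, Sl_vol μhaar hnorm ϖ n, ENNReal.toReal_one]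
  have hIon : IntegrableOn Φ (⋃ m : ℕ, Sl ϖ (n0 + m)) μhaar := by
    refine integrableOn_iUnion_of_summable_integral_norm
      (fun m => Sl_int μhaar ϖ _ Φ hΦlc) ?_
    refine Summable.of_nonneg_of_le (f := fun m : ℕ => C * ‖t ^ n0‖ * (r * ‖t‖) ^ m)
      (fun m => integral_nonneg fun x => norm_nonneg _) (fun m => ?_) ?_
    · have h1 := norm_setIntegral_le_of_norm_le_const (μ := μhaar) (s := Sl ϖ (n0 + m))
        (f := fun x => ‖Φ x‖) (C := C * ‖t ^ n0‖ * (r * ‖t‖) ^ m)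
        (by rw [Sl_vol μhaar hnorm]; exact ENNReal.one_lt_top) (by
          intro x hx
          rw [norm_norm, hΦ]
          simp only
          rw [norm_mul, Sl_cpow ϖ _ x hx s, ← ht, zpow_add₀ ht0, zpow_natCast, norm_mul, norm_pow]
          calc ‖g x‖ * (‖t ^ n0‖ * ‖t‖ ^ m) ≤ C * r ^ m * (‖t ^ n0‖ * ‖t‖ ^ m) := by
                gcongr
                exact hC m x hx
            _ = _ := by rw [mul_pow]; ring)
      rw [hvol, mul_one] at h1
      exact (le_abs_self _).trans h1
    · exact (summable_geometric_of_lt_one (by positivity) hs).mul_left _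
  have hI : Integrable Φ μhaar := (integrableOn_iff_integrable_of_support_subset hsub).1 hIon
  refine ⟨hI, ?_⟩
  have hdisj : Pairwise (Function.onFun Disjoint fun m : ℕ => Sl ϖ (n0 + m)) := by
    intro i j hij
    refine Set.disjoint_left.2 fun x hx hy => hij ?_
    have h1 : ‖(x : K)‖ = ‖(ϖ : K)‖ ^ (n0 + i) := hx
    have h2 : ‖(x : K)‖ = ‖(ϖ : K)‖ ^ (n0 + j) := hy
    rw [h1] at h2
    have := zpow_right_injective₀ (pi_pos ϖ) hϖlt.ne h2
    omega
  have h := hasSum_integral_iUnion (fun m : ℕ => Sl_meas ϖ (n0 + m)) hdisj hIon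
  rw [setIntegral_eq_integral_of_forall_compl_eq_zero (fun x hx => by
    by_contra h0
    exact hx (hsub h0))] at h
  have h2 := h.mul_left ((t ^ n0)⁻¹)
  suffices heq : (fun m : ℕ => (∫ x in Sl ϖ (n0 + m), g x ∂μhaar) * t ^ m) =
      fun m : ℕ => (t ^ n0)⁻¹ * ∫ x in Sl ϖ (n0 + m), Φ x ∂μhaar by
    rw [heq]
    exact h2
  funext m
  rw [setIntegral_congr_fun (f := Φ) (g := fun x => g x * t ^ (n0 + m)) (Sl_meas ϖ (n0 + m))
    (fun x hx => by
      show g x * (‖(x : K)‖ : ℂ) ^ s = _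
      rw [Sl_cpow ϖ _ x hx s]), integral_mul_const, zpow_add₀ ht0, zpow_natCast]
  field_simp

end ZetaPart

set_option linter.unusedSectionVars false
section ZetaPart2

open Aff MeasureTheory

variable {K : Type*} [NontriviallyNormedField K] [IsUltrametricDist K] [ProperSpace K]

/-- Shells deep enough lie in any ball. -/
lemma deep (ϖ : Kˣ) (hϖlt : ‖(ϖ : K)‖ < 1) (ε : ℝ) (hε : 0 < ε) :
    ∃ n1 : ℤ, ∀ n, n1 ≤ n → ∀ x ∈ Sl ϖ n, ‖(x : K)‖ < ε := by
  obtain ⟨k, hk⟩ := exists_pow_lt_of_lt_one hε hϖlt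
  refine ⟨k, fun n hn x hx => ?_⟩
  have h : ‖(x : K)‖ = ‖(ϖ : K)‖ ^ n := hx
  rw [h]
  refine lt_of_le_of_lt ?_ hk
  rw [← zpow_natCast]
  exact zpow_le_zpow_right_of_le_one₀ (pi_pos ϖ) hϖlt.le hn

lemma F_pow (ψ : AddChar K ℂ) (M : Submodule ℂ (Kˣ → ℂ)) (hMi : GRep.Invariant (repCx K ψ) M)
    (χ : Kˣ →* ℂˣ) (u : Kˣ) (v : M) (j : ℕ) :
    (((χ u : ℂ) • piZeroT (GRep.sub (repCx K ψ) hMi) u) ^ j) (Submodule.Quotient.mk v) =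
      Submodule.Quotient.mk ((χ u : ℂ) ^ j • GRep.sub (repCx K ψ) hMi (xT (u ^ j)) v) := by
  have h : ∀ j, (piZeroT (GRep.sub (repCx K ψ) hMi) u ^ j) (Submodule.Quotient.mk v) =
      Submodule.Quotient.mk (GRep.sub (repCx K ψ) hMi (xT (u ^ j)) v) := by
    intro j
    rw [← map_pow]
    exact piZeroT_mk ψ M hMi (u ^ j) v
  rw [smul_pow, LinearMap.smul_apply, h j]
  rfl

/-- Linear relations in the coinvariants give recurrences near `0`. -/
lemma rec_near (ψ : AddChar K ℂ) (hψlc : IsLocallyConstant (⇑ψ))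
    (M : Submodule ℂ (Kˣ → ℂ)) (hMi : GRep.Invariant (repCx K ψ) M)
    (χ : Kˣ →* ℂˣ) (ϖ : Kˣ) (v : M) (e : ℕ) (p : ℕ → ℂ)
    (h : ∑ j ∈ Finset.range (e + 1),
      p j • (((χ ϖ : ℂ) • piZeroT (GRep.sub (repCx K ψ) hMi) ϖ) ^ j)
        (Submodule.Quotient.mk v : M ⧸ sCoinvKer (GRep.sub (repCx K ψ) hMi)) = 0) :
    ∃ ε : ℝ, 0 < ε ∧ ∀ x : Kˣ, ‖(x : K)‖ < ε →
      ∑ j ∈ Finset.range (e + 1), p j * phi χ v (x * ϖ ^ j) = 0 := by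
  set ρ := GRep.sub (repCx K ψ) hMi with hρ
  have h1 : (Submodule.Quotient.mk (∑ j ∈ Finset.range (e + 1),
      p j • ((χ ϖ : ℂ) ^ j • ρ (xT (ϖ ^ j)) v)) : M ⧸ sCoinvKer ρ) = 0 := by
    rw [← h]
    rw [← Submodule.mkQ_apply, map_sum]
    refine Finset.sum_congr rfl fun j _ => ?_
    rw [F_pow, map_smul]
    rfl
  rw [Submodule.Quotient.mk_eq_zero] at h1
  obtain ⟨ε, hε, hx⟩ := coinv_near ψ hψlc M hMi _ h1
  refine ⟨ε, hε, fun x hxε => ?_⟩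
  have h2 := hx x hxε
  rw [Submodule.coe_sum, Finset.sum_apply] at h2
  have h3 : ∀ j ∈ Finset.range (e + 1), p j * phi χ v (x * ϖ ^ j) =
      (χ x : ℂ) * ((p j • ((χ ϖ : ℂ) ^ j • ρ (xT (ϖ ^ j)) v) : M) : Kˣ → ℂ) x := by
    intro j _
    rw [Submodule.coe_smul, Submodule.coe_smul, Pi.smul_apply, Pi.smul_apply, hρ, sub_xT]
    simp only [phi, map_mul, map_pow, Units.val_mul, Units.val_pow_eq_pow_val, smul_eq_mul]
    ring
  rw [Finset.sum_congr rfl h3, ← Finset.mul_sum, h2, mul_zero]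

lemma growth (ϖ : Kˣ) (hϖlt : ‖(ϖ : K)‖ < 1) (g : Kˣ → ℂ) (hg : IsLocallyConstant g)
    (d : ℕ) (p : ℕ → ℂ) (hp : p d = 1) (ε : ℝ) (hε : 0 < ε)
    (hrec : ∀ x : Kˣ, ‖(x : K)‖ < ε → ∑ j ∈ Finset.range (d + 1), p j * g (x * ϖ ^ j) = 0)
    (n0 : ℤ) : ∃ C r : ℝ, 0 ≤ C ∧ 1 ≤ r ∧ ∀ m : ℕ, ∀ x ∈ Sl ϖ (n0 + m), ‖g x‖ ≤ C * r ^ m := by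
  obtain ⟨n1, hn1⟩ := deep ϖ hϖlt ε hε
  set m1 : ℕ := (n1 - n0).toNat + d with hm1
  obtain ⟨C, hC⟩ := (annulus_compact (K := K) (‖(ϖ : K)‖ ^ (n0 + m1)) (‖(ϖ : K)‖ ^ n0)
    (zpow_pos (pi_pos ϖ) _)).exists_bound_of_continuousOn hg.continuous.continuousOn
  have hr1 : 1 ≤ 1 + ∑ j ∈ Finset.range d, ‖p j‖ := by
    have : 0 ≤ ∑ j ∈ Finset.range d, ‖p j‖ := Finset.sum_nonneg fun _ _ => norm_nonneg _
    linarith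
  refine ⟨max C 0, 1 + ∑ j ∈ Finset.range d, ‖p j‖, le_max_right _ _, hr1, ?_⟩
  set r := 1 + ∑ j ∈ Finset.range d, ‖p j‖ with hr
  have hC0 : 0 ≤ max C 0 := le_max_right _ _
  intro m
  induction m using Nat.strong_induction_on with
  | _ m ih =>
    intro x hx
    have hxn : ‖(x : K)‖ = ‖(ϖ : K)‖ ^ (n0 + m) := hx
    by_cases hm : m ≤ m1
    · have h1 : ‖g x‖ ≤ C := by
        refine hC x ⟨?_, ?_⟩
        · rw [hxn]
          exact zpow_le_zpow_right_of_le_one₀ (pi_pos ϖ) hϖlt.le (by omega)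
        · rw [hxn]
          exact zpow_le_zpow_right_of_le_one₀ (pi_pos ϖ) hϖlt.le (by omega)
      calc ‖g x‖ ≤ max C 0 * 1 := by rw [mul_one]; exact h1.trans (le_max_left _ _)
        _ ≤ max C 0 * r ^ m := by
          gcongr
          exact one_le_pow₀ hr1
    · push Not at hm
      obtain ⟨k, hk⟩ : ∃ k, m = k + d := ⟨m - d, by omega⟩
      set y : Kˣ := x * (ϖ ^ d)⁻¹ with hy
      have hymem : y ∈ Sl ϖ (n0 + k) := by
        have := Sl_mul ϖ (n0 + k) d (ϖ ^ d) (by simp) y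
        rw [← this, hy, inv_mul_cancel_right]
        convert hx using 2
        omega
      have h0 := hrec y (hn1 (n0 + k) (by omega) y hymem)
      rw [Finset.sum_range_succ, hp, one_mul, hy, inv_mul_cancel_right, ← hy] at h0
      have h1 : g x = -∑ j ∈ Finset.range d, p j * g (y * ϖ ^ j) := by
        rw [eq_neg_iff_add_eq_zero, add_comm]
        exact h0
      rcases Nat.eq_zero_or_pos d with hd | hd
      · subst hd
        rw [h1]
        simp only [Finset.range_zero, Finset.sum_empty, neg_zero, norm_zero]
        positivity
      rw [h1, norm_neg]
      calc ‖∑ j ∈ Finset.range d, p j * g (y * ϖ ^ j)‖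
          ≤ ∑ j ∈ Finset.range d, ‖p j‖ * (max C 0 * r ^ (m - 1)) := by
            refine norm_sum_le_of_le _ fun j hj => ?_
            have hjd := Finset.mem_range.1 hj
            rw [norm_mul]
            refine mul_le_mul_of_nonneg_left ?_ (norm_nonneg _)
            have hmem : y * ϖ ^ j ∈ Sl ϖ (n0 + ((k + j : ℕ) : ℤ)) := by
              have := (Sl_mul ϖ (n0 + k) j (ϖ ^ j) (by simp) y).2 hymem
              convert this using 2
              push_cast
              ring
            refine (ih (k + j) (by omega) _ hmem).trans ?_
            exact mul_le_mul_of_nonneg_left (pow_le_pow_right₀ hr1 (by omega)) hC0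
        _ = (∑ j ∈ Finset.range d, ‖p j‖) * (max C 0 * r ^ (m - 1)) := by rw [Finset.sum_mul]
        _ ≤ r * (max C 0 * r ^ (m - 1)) := by
            refine mul_le_mul_of_nonneg_right (by linarith) (by positivity)
        _ = max C 0 * r ^ m := by
            have : m = (m - 1) + 1 := by omega
            rw [this, pow_succ, Nat.add_sub_cancel]
            ring

/-- Units act semisimply on the twisted coinvariants. -/
lemma unit_ss (ψ : AddChar K ℂ) (hψlc : IsLocallyConstant (⇑ψ)) (hψne : ψ ≠ 1)
    (M : Submodule ℂ (Kˣ → ℂ)) (hMi : GRep.Invariant (repCx K ψ) M) (hMle : M ≤ Cb K)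
    (χ : Kˣ →* ℂˣ) (hχ : SmoothMulChar χ) (u : Kˣ) (hu : ‖(u : K)‖ = 1)
    (x : M ⧸ sCoinvKer (GRep.sub (repCx K ψ) hMi))
    (hx : ((χ u : ℂ) • piZeroT (GRep.sub (repCx K ψ) hMi) u - 1)
      (((χ u : ℂ) • piZeroT (GRep.sub (repCx K ψ) hMi) u - 1) x) = 0) :
    ((χ u : ℂ) • piZeroT (GRep.sub (repCx K ψ) hMi) u - 1) x = 0 := by
  obtain ⟨v, rfl⟩ := Submodule.mkQ_surjective _ x
  rw [Submodule.mkQ_apply] at hx ⊢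
  set ρ := GRep.sub (repCx K ψ) hMi with hρ
  have key : ∀ v : M, ((χ u : ℂ) • piZeroT ρ u - 1) (Submodule.Quotient.mk v) =
      Submodule.Quotient.mk ((χ u : ℂ) • ρ (xT u) v - v) := fun v => rfl
  rw [key, key, Submodule.Quotient.mk_eq_zero] at hx
  rw [key, Submodule.Quotient.mk_eq_zero]
  obtain ⟨ε, hε, hnear⟩ := coinv_near ψ hψlc M hMi _ hx
  refine near_coinv ψ hψlc hψne M hMi hMle _ ⟨ε, hε, fun x hxε => ?_⟩
  have hlc := phi_lc χ hχ v (hMle v.2).1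
  have hev : ∀ (w : M) (y : Kˣ), (χ y : ℂ) * (((χ u : ℂ) • ρ (xT u) w - w : M) : Kˣ → ℂ) y =
      phi χ w (y * u) - phi χ w y := by
    intro w y
    rw [Submodule.coe_sub, Pi.sub_apply, Submodule.coe_smul, Pi.smul_apply, hρ, sub_xT]
    simp only [phi, map_mul, Units.val_mul, smul_eq_mul]
    ring
  set a := ‖(x : K)‖ with ha
  have hapos : 0 < a := norm_pos_iff.2 x.ne_zero
  set V := toSh a hapos (phi χ v) hlc with hV
  obtain ⟨r, hr, hfin⟩ := trS_fin a hapos u hu V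
  have hs := semis (trS a u hu) 1 V r hr hfin (by
    apply Subtype.ext
    funext y
    rw [one_smul, one_smul, trS_apply, Submodule.coe_sub, Pi.sub_apply, Pi.sub_apply, trS_apply,
      trS_apply, hV]
    simp only [toSh_apply, norm_mul_unit u hu]
    by_cases hy : ‖(y : K)‖ = a
    · simp only [hy, if_true]
      have h1 := hnear y (by rw [hy]; exact hxε)
      have h2 := hev ((χ u : ℂ) • ρ (xT u) v - v) y
      rw [h1, mul_zero] at h2
      have h3 : ∀ z : Kˣ, phi χ ((χ u : ℂ) • ρ (xT u) v - v : M) z =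
          phi χ v (z * u) - phi χ v z := by
        intro z
        rw [← hev]
        exact mul_comm _ _
      rw [h3, h3] at h2
      exact (sub_eq_zero.1 h2.symm)
    · simp [hy])
  have h4 := congrArg (fun W : Sh K a => (W : Kˣ → ℂ) x) hs
  simp only [one_smul] at h4
  rw [trS_apply, hV] at h4
  simp only [toSh_apply, norm_mul_unit u hu, ← ha, if_true] at h4
  have h5 := hev v x
  rw [h4, sub_self] at h5
  exact (mul_eq_zero.1 h5).resolve_left (Units.ne_zero _)

end ZetaPart2

set_option linter.unusedSectionVars false
section ZetaPart3

open Aff MeasureTheory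

variable {K : Type*} [NontriviallyNormedField K] [IsUltrametricDist K] [ProperSpace K]

lemma supp_shell (ϖ : Kˣ) (hϖlt : ‖(ϖ : K)‖ < 1)
    (hϖgen : ∀ x : Kˣ, ∃ n : ℤ, ‖(x : K)‖ = ‖(ϖ : K)‖ ^ n) (f : Kˣ → ℂ) (hf : f ∈ Cb K) :
    ∃ n0 : ℤ, ∀ x, f x ≠ 0 → ∃ m : ℕ, x ∈ Sl ϖ (n0 + m) := by
  obtain ⟨R, hR⟩ := Cb_bdd f hf
  obtain ⟨k, hk⟩ := exists_pow_lt_of_lt_one (show (0 : ℝ) < (|R| + 1)⁻¹ by positivity) hϖlt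
  refine ⟨-k, fun x hx => ?_⟩
  obtain ⟨n, hn⟩ := hϖgen x
  have hle : -(k : ℤ) ≤ n := by
    by_contra hlt
    push Not at hlt
    have h1 : ‖(ϖ : K)‖ ^ (-(k : ℤ)) ≤ ‖(ϖ : K)‖ ^ n :=
      zpow_le_zpow_right_of_le_one₀ (pi_pos ϖ) hϖlt.le hlt.le
    rw [zpow_neg, zpow_natCast, ← hn] at h1
    have h2 := (lt_inv_comm₀ (pow_pos (pi_pos ϖ) k) (by positivity)).1 hk
    have h3 := hR x hx
    have h4 := le_abs_self R
    linarith
  refine ⟨(n + k).toNat, ?_⟩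
  show ‖(x : K)‖ = _
  rw [hn]
  congr 1
  omega

variable [MeasurableSpace Kˣ] [BorelSpace Kˣ]

/-- Functions whose twisted shell integrals vanish near `0`. -/
def EvZ (μhaar : Measure Kˣ) [μhaar.IsHaarMeasure] (ϖ : Kˣ)
    (χ : Kˣ →* ℂˣ) (hχ : SmoothMulChar χ) (M : Submodule ℂ (Kˣ → ℂ)) (hMle : M ≤ Cb K) :
    Submodule ℂ M where
  carrier := {v | ∃ n1 : ℤ, ∀ n, n1 ≤ n → ∫ x in Sl ϖ n, phi χ (v : Kˣ → ℂ) x ∂μhaar = 0}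
  zero_mem' := ⟨0, fun n _ => by simp [phi]⟩
  add_mem' {v w} hv hw := by
    obtain ⟨a, ha⟩ := hv
    obtain ⟨b, hb⟩ := hw
    refine ⟨max a b, fun n hn => ?_⟩
    have h : ∀ x, phi χ ((v + w : M) : Kˣ → ℂ) x = phi χ (v : Kˣ → ℂ) x + phi χ (w : Kˣ → ℂ) x :=
      fun x => by simp [phi, add_mul]
    simp only [h]
    rw [integral_add (Sl_int μhaar ϖ n _ (phi_lc χ hχ _ (hMle v.2).1))
      (Sl_int μhaar ϖ n _ (phi_lc χ hχ _ (hMle w.2).1)), ha n ((le_max_left _ _).trans hn),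
      hb n ((le_max_right _ _).trans hn), add_zero]
  smul_mem' c v hv := by
    obtain ⟨a, ha⟩ := hv
    refine ⟨a, fun n hn => ?_⟩
    have h : ∀ x, phi χ ((c • v : M) : Kˣ → ℂ) x = c * phi χ (v : Kˣ → ℂ) x :=
      fun x => by simp [phi, mul_assoc]
    simp only [h]
    rw [integral_const_mul, ha n hn, mul_zero]

lemma near_EvZ (μhaar : Measure Kˣ) [μhaar.IsHaarMeasure] (ϖ : Kˣ) (hϖlt : ‖(ϖ : K)‖ < 1)
    (χ : Kˣ →* ℂˣ) (hχ : SmoothMulChar χ) (M : Submodule ℂ (Kˣ → ℂ)) (hMle : M ≤ Cb K)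
    (v : M) (hv : Near0 (v : Kˣ → ℂ)) : v ∈ EvZ μhaar ϖ χ hχ M hMle := by
  obtain ⟨ε, hε, h⟩ := hv
  obtain ⟨n1, hn1⟩ := deep ϖ hϖlt ε hε
  refine ⟨n1, fun n hn => ?_⟩
  refine setIntegral_eq_zero_of_forall_eq_zero fun x hx => ?_
  rw [phi, h x (hn1 n hn x hx), zero_mul]

/-- Reduction to the unramified part. -/
lemma to_unr (ψ : AddChar K ℂ) (hψlc : IsLocallyConstant (⇑ψ)) (hψne : ψ ≠ 1)
    (μhaar : Measure Kˣ) [μhaar.IsHaarMeasure] (ϖ : Kˣ) (hϖlt : ‖(ϖ : K)‖ < 1)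
    (M : Submodule ℂ (Kˣ → ℂ)) (hMi : GRep.Invariant (repCx K ψ) M) (hMle : M ≤ Cb K)
    (χ : Kˣ →* ℂˣ) (hχ : SmoothMulChar χ)
    [FiniteDimensional ℂ (M ⧸ sCoinvKer (GRep.sub (repCx K ψ) hMi))] (f : M) :
    ∃ z : M, (Submodule.Quotient.mk z : M ⧸ sCoinvKer (GRep.sub (repCx K ψ) hMi)) ∈
        unrPart (piZeroT (GRep.sub (repCx K ψ) hMi)) χ ∧
      f - z ∈ EvZ μhaar ϖ χ hχ M hMle := by
  have hcomm : ∀ u w : Kˣ, ∀ x : M ⧸ sCoinvKer (GRep.sub (repCx K ψ) hMi),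
      piZeroT (GRep.sub (repCx K ψ) hMi) u (piZeroT (GRep.sub (repCx K ψ) hMi) w x) =
      piZeroT (GRep.sub (repCx K ψ) hMi) w (piZeroT (GRep.sub (repCx K ψ) hMi) u x) := by
    intro u w x
    rw [← Module.End.mul_apply, ← map_mul, mul_comm, map_mul, Module.End.mul_apply]
  obtain ⟨y, hy1, hy2⟩ := fitting_family
    (fun u : {u : Kˣ // ‖(u : K)‖ = 1} =>
      ((χ u.1 : ℂ) • piZeroT (GRep.sub (repCx K ψ) hMi) u.1 - 1 :
        Module.End ℂ (M ⧸ sCoinvKer (GRep.sub (repCx K ψ) hMi))))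
    (by
      intro i j x
      simp only [LinearMap.sub_apply, LinearMap.smul_apply, Module.End.one_apply, map_sub, map_smul]
      rw [hcomm i.1 j.1 x, smul_sub, smul_sub, smul_comm]
      abel)
    (fun i x hx => unit_ss ψ hψlc hψne M hMi hMle χ hχ i.1 i.2 x hx)
    ((EvZ μhaar ϖ χ hχ M hMle).map (sCoinvKer (GRep.sub (repCx K ψ) hMi)).mkQ)
    (by
      intro i x
      obtain ⟨v, rfl⟩ := Submodule.mkQ_surjective _ x
      refine ⟨(χ i.1 : ℂ) • GRep.sub (repCx K ψ) hMi (xT i.1) v - v, ?_, rfl⟩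
      refine ⟨0, fun n _ => ?_⟩
      have hev : ∀ y : Kˣ, phi χ (((χ i.1 : ℂ) • GRep.sub (repCx K ψ) hMi (xT i.1) v - v : M) :
          Kˣ → ℂ) y = phi χ v (y * i.1) - phi χ v y := by
        intro y
        rw [phi, Submodule.coe_sub, Pi.sub_apply, Submodule.coe_smul, Pi.smul_apply, sub_xT]
        simp only [phi, map_mul, Units.val_mul, smul_eq_mul]
        ring
      have hlc := phi_lc χ hχ v (hMle v.2).1
      simp only [hev]
      rw [integral_sub (f := fun x => phi χ v (x * i.1))
        (Sl_int μhaar ϖ n _ (hlc.comp_continuous (continuous_mul_const i.1)))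
        (Sl_int μhaar ϖ n _ hlc), Sl_shift μhaar ϖ n 0 i.1 (by simpa using i.2), add_zero,
        sub_self])
    (Submodule.Quotient.mk f)
  obtain ⟨z, rfl⟩ := Submodule.mkQ_surjective _ y
  refine ⟨z, ?_, ?_⟩
  · intro u hu
    have := hy1 ⟨u, hu⟩
    exact sub_eq_zero.1 this
  · obtain ⟨w, hw, hwe⟩ := hy2
    have h1 : f - z - w ∈ sCoinvKer (GRep.sub (repCx K ψ) hMi) := by
      rw [← Submodule.Quotient.mk_eq_zero, Submodule.Quotient.mk_sub, Submodule.Quotient.mk_sub,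
        sub_eq_zero]
      exact hwe.symm
    have h2 := near_EvZ μhaar ϖ hϖlt χ hχ M hMle _ (coinv_near ψ hψlc M hMi _ h1)
    have h3 := Submodule.add_mem _ h2 hw
    rwa [sub_add_cancel] at h3

/-- Recurrence for the shell integrals with characteristic polynomial from the unramified part. -/
lemma shell_rec (ψ : AddChar K ℂ) (hψlc : IsLocallyConstant (⇑ψ)) (hψne : ψ ≠ 1)
    (μhaar : Measure Kˣ) [μhaar.IsHaarMeasure] (ϖ : Kˣ) (hϖlt : ‖(ϖ : K)‖ < 1)
    (M : Submodule ℂ (Kˣ → ℂ)) (hMi : GRep.Invariant (repCx K ψ) M) (hMle : M ≤ Cb K)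
    (χ : Kˣ →* ℂˣ) (hχ : SmoothMulChar χ)
    [FiniteDimensional ℂ (M ⧸ sCoinvKer (GRep.sub (repCx K ψ) hMi))] (f : M) :
    ∃ n1 : ℤ, ∀ n, n1 ≤ n →
      ∑ j ∈ Finset.range ((twistOp (piZeroT (GRep.sub (repCx K ψ) hMi)) χ ϖ).charpoly.natDegree + 1),
        (twistOp (piZeroT (GRep.sub (repCx K ψ) hMi)) χ ϖ).charpoly.coeff j *
          ∫ x in Sl ϖ (n + j), phi χ (f : Kˣ → ℂ) x ∂μhaar = 0 := by
  obtain ⟨z, hz, n2, hn2⟩ := to_unr ψ hψlc hψne μhaar ϖ hϖlt M hMi hMle χ hχ f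
  have hfz : ∀ n, n2 ≤ n → ∫ x in Sl ϖ n, phi χ (f : Kˣ → ℂ) x ∂μhaar =
      ∫ x in Sl ϖ n, phi χ (z : Kˣ → ℂ) x ∂μhaar := by
    intro n hn
    have h := hn2 n hn
    have h' : ∀ x, phi χ ((f - z : M) : Kˣ → ℂ) x = phi χ (f : Kˣ → ℂ) x - phi χ (z : Kˣ → ℂ) x :=
      fun x => by simp [phi, sub_mul]
    simp only [h'] at h
    rw [integral_sub (Sl_int μhaar ϖ n _ (phi_lc χ hχ _ (hMle f.2).1))
      (Sl_int μhaar ϖ n _ (phi_lc χ hχ _ (hMle z.2).1))] at h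
    exact sub_eq_zero.1 h
  set T := twistOp (piZeroT (GRep.sub (repCx K ψ) hMi)) χ ϖ with hT
  have hCH := congrArg (fun A : Module.End ℂ _ => ((A ⟨_, hz⟩ :
    unrPart (piZeroT (GRep.sub (repCx K ψ) hMi)) χ) :
      M ⧸ sCoinvKer (GRep.sub (repCx K ψ) hMi))) (LinearMap.aeval_self_charpoly T)
  simp only [LinearMap.zero_apply, ZeroMemClass.coe_zero] at hCH
  rw [Polynomial.aeval_eq_sum_range, LinearMap.sum_apply, Submodule.coe_sum] at hCH
  obtain ⟨ε, hε, hrec⟩ := rec_near ψ hψlc M hMi χ ϖ z T.charpoly.natDegree T.charpoly.coeff (by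
    rw [← hCH]
    refine Finset.sum_congr rfl fun j _ => ?_
    rw [LinearMap.smul_apply, Submodule.coe_smul]
    congr 1
    rw [hT, twistOp, Module.End.pow_restrict]
    rfl)
  obtain ⟨n3, hn3⟩ := deep ϖ hϖlt ε hε
  refine ⟨max n2 n3, fun n hn => ?_⟩
  have hlc := phi_lc χ hχ z (hMle z.2).1
  have h1 : ∀ j ∈ Finset.range (T.charpoly.natDegree + 1),
      T.charpoly.coeff j * ∫ x in Sl ϖ (n + j), phi χ (f : Kˣ → ℂ) x ∂μhaar =
      ∫ x in Sl ϖ n, T.charpoly.coeff j * phi χ (z : Kˣ → ℂ) (x * ϖ ^ j) ∂μhaar := by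
    intro j _
    have hm := (le_max_left n2 n3).trans hn
    rw [hfz (n + j) (by omega), integral_const_mul,
      Sl_shift μhaar ϖ n j (ϖ ^ j) (by simp) (phi χ (z : Kˣ → ℂ))]
  rw [Finset.sum_congr rfl h1, ← integral_finsetSum]
  · refine setIntegral_eq_zero_of_forall_eq_zero fun x hx => ?_
    exact hrec x (hn3 n ((le_max_right _ _).trans hn) x hx)
  · intro j _
    exact (Sl_int μhaar ϖ n _ (hlc.comp_continuous (continuous_mul_const (ϖ ^ j)))).const_mul _

end ZetaPart3

section Statements

open Aff

variable {K : Type*} [NontriviallyNormedField K] [IsUltrametricDist K] [ProperSpace K]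

theorem statement19
    (hchar : (2 : K) ≠ 0)
    (ψ : AddChar K ℂ) (hψlc : IsLocallyConstant (⇑ψ)) (hψne : ψ ≠ 1)
    [MeasurableSpace Kˣ] [BorelSpace Kˣ]
    (μhaar : MeasureTheory.Measure Kˣ) [μhaar.IsHaarMeasure]
    (hnorm : μhaar {u : Kˣ | ‖(u : K)‖ = 1} = 1)
    (ϖ : Kˣ) (hϖlt : ‖(ϖ : K)‖ < 1)
    (hϖgen : ∀ x : Kˣ, ∃ n : ℤ, ‖(x : K)‖ = ‖(ϖ : K)‖ ^ n)
    (M : Submodule ℂ (Kˣ → ℂ)) (hMi : GRep.Invariant (repCx K ψ) M) (hMle : M ≤ Cb K)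
    (hMne : M ≠ ⊥) (c : CompSeries (GRep.sub (repCx K ψ) hMi))
    (χ : Kˣ →* ℂˣ) (hχ : SmoothMulChar χ) (f : Kˣ → ℂ) (hf : f ∈ M) :
    ∃ s₀ : ℝ,
      (∀ s : ℂ, s₀ < s.re → MeasureTheory.Integrable
        (fun x : Kˣ => f x * (χ x : ℂ) * (‖(x : K)‖ : ℂ) ^ s) μhaar) ∧
      ∃ h : ℂ → ℂ, Differentiable ℂ h ∧
        ∀ s : ℂ, s₀ < s.re →
          (∫ x : Kˣ, f x * (χ x : ℂ) * (‖(x : K)‖ : ℂ) ^ s ∂μhaar)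
            = h s * Lfactor (piZeroT (GRep.sub (repCx K ψ) hMi)) χ ϖ s := by
  have : FiniteDimensional ℂ (M ⧸ sCoinvKer (GRep.sub (repCx K ψ) hMi)) :=
    fd_X ψ hψlc hψne M hMi hMle ϖ hϖgen c
  set F : Module.End ℂ (M ⧸ sCoinvKer (GRep.sub (repCx K ψ) hMi)) :=
    (χ ϖ : ℂ) • piZeroT (GRep.sub (repCx K ψ) hMi) ϖ with hF
  have hlc : IsLocallyConstant (phi χ f) := phi_lc χ hχ f (hMle hf).1
  obtain ⟨n0, hn0⟩ := supp_shell ϖ hϖlt hϖgen f (hMle hf)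
  have hsupp : ∀ x, phi χ f x ≠ 0 → ∃ m : ℕ, x ∈ Sl ϖ (n0 + m) :=
    fun x hx => hn0 x (left_ne_zero_of_mul hx)
  -- growth
  obtain ⟨ε, hε, hrec⟩ := rec_near ψ hψlc M hMi χ ϖ ⟨f, hf⟩ F.charpoly.natDegree F.charpoly.coeff
    (by
      have h := congrArg (fun A : Module.End ℂ _ => A (Submodule.Quotient.mk ⟨f, hf⟩))
        (LinearMap.aeval_self_charpoly F)
      simp only [LinearMap.zero_apply] at h
      rw [Polynomial.aeval_eq_sum_range, LinearMap.sum_apply] at h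
      exact h)
  obtain ⟨C, r, hC0, hr1, hCr⟩ := growth ϖ hϖlt (phi χ f) hlc F.charpoly.natDegree F.charpoly.coeff
    (LinearMap.charpoly_monic F) ε hε hrec n0
  -- recurrence
  obtain ⟨n1, hn1⟩ := shell_rec ψ hψlc hψne μhaar ϖ hϖlt M hMi hMle χ hχ ⟨f, hf⟩
  set T := twistOp (piZeroT (GRep.sub (repCx K ψ) hMi)) χ ϖ with hT
  obtain ⟨δ, hδ, hdet⟩ := det_small T
  set q := ‖(ϖ : K)‖ with hq
  have hq0 : 0 < q := pi_pos ϖ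
  -- abscissa
  obtain ⟨k, hk⟩ := exists_pow_lt_of_lt_one
    (show (0 : ℝ) < min δ r⁻¹ from lt_min hδ (by positivity)) hϖlt
  have htn : ∀ s : ℂ, (k : ℝ) < s.re → ‖(q : ℂ) ^ s‖ < min δ r⁻¹ := by
    intro s hs
    rw [Complex.norm_cpow_eq_rpow_re_of_pos hq0]
    refine lt_of_le_of_lt ?_ hk
    rw [← Real.rpow_natCast]
    exact Real.rpow_le_rpow_of_exponent_ge hq0 hϖlt.le hs.le
  have hz : ∀ s : ℂ, (k : ℝ) < s.re → _ := fun s hs =>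
    zeta_sum μhaar hnorm ϖ hϖlt (phi χ f) hlc n0 hsupp C r hCr hC0 (by linarith) s (by
      have h1 := (htn s hs).trans_le (min_le_right _ _)
      rwa [lt_inv_comm₀ (norm_pos_iff.2 (by
        rw [Ne, Complex.cpow_eq_zero_iff, not_and_or]
        left
        exact_mod_cast hq0.ne')) (by linarith), ← one_div, lt_div_iff₀ (norm_pos_iff.2 (by
        rw [Ne, Complex.cpow_eq_zero_iff, not_and_or]
        left
        exact_mod_cast hq0.ne'))] at h1)
  refine ⟨k, fun s hs => (hz s hs).1, ?_⟩
  set b : ℕ → ℂ := fun m => ∫ x in Sl ϖ (n0 + m), phi χ f x ∂μhaar with hb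
  set m0 : ℕ := (n1 - n0).toNat with hm0
  set e := T.charpoly.natDegree with he
  refine ⟨fun s => ((q : ℂ) ^ s) ^ n0 * ∑ j ∈ Finset.range (e + 1),
    T.charpoly.coeff j * ((q : ℂ) ^ s) ^ (e - j) *
      ∑ i ∈ Finset.range (m0 + j), b i * ((q : ℂ) ^ s) ^ i, ?_, ?_⟩
  · have hqc : (q : ℂ) ≠ 0 := by exact_mod_cast hq0.ne'
    have hd : Differentiable ℂ fun s : ℂ => (q : ℂ) ^ s := fun s =>
      differentiableAt_id.const_cpow (Or.inl hqc)
    refine Differentiable.mul ?_ ?_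
    · intro s
      refine (hd s).zpow (Or.inl ?_)
      rw [Ne, Complex.cpow_eq_zero_iff, not_and_or]
      exact Or.inl hqc
    · fun_prop
  · intro s hs
    obtain ⟨-, hsum⟩ := hz s hs
    have ht0 : (q : ℂ) ^ s ≠ 0 := by
      rw [Ne, Complex.cpow_eq_zero_iff, not_and_or]
      left
      exact_mod_cast hq0.ne'
    have hR := rec_series e m0 T.charpoly.coeff b (by
      intro m hm
      have h := hn1 (n0 + m) (by omega)
      rw [← h]
      refine Finset.sum_congr rfl fun j _ => ?_
      rw [hb]
      simp only [Nat.cast_add, add_assoc]) _ _ hsum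
    have hD := hdet _ ((htn s hs).trans_le (min_le_left _ _))
    show ∫ x : Kˣ, phi χ f x * (‖(x : K)‖ : ℂ) ^ s ∂μhaar = _
    rw [Lfactor, ← hT, ← hq, det_rev T _ ht0, ← he]
    rw [← hq] at hR
    simp only
    rw [← hR]
    field_simp

end Statements

end PSW
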